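/- There exists α₀ > 0 such that for every α ∈ (0, α₀), every finite index set X, and every map y : X → ℝ³ satisfying |y(x) − y(x')| > 1 − α for all distinct x, x' ∈ X, the following holds for every x ∈ X: the nearest neighborhood N(x) = {x' ∈ X : x' ≠ x and ||y(x') − y(x)| − 1| ≤ α} has at most 12 elements, and the set A(x) of ordered pairs (x', x'') of distinct elements of N(x) with ||y(x') − y(x'')| − 1| ≤ α has at most 48 elements. -/

import Mathlib

/-!
**Reduction to the rigid problem.** For fixed `n` and a fixed set `S` of pairs, the families of `n`
vectors that satisfy the hypotheses up to tolerance `α` and realise the pairs of `S` form decreasing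
compact sets as `α → 0` (`approx`). If they are nonempty for all small `α`, there is a family with
`α = 0`. Only finitely many `(n, S)` with `n ≤ 13` matter, so one tolerance serves for all of them
(`exists_tolerance`), and it remains to treat unit vectors with pairwise inner products at most
`1/2` (`Kissing`, `rigid`), where a contact is a pair with inner product exactly `1/2` (`Ct`).

**At most twelve vectors** (`Kissing.card_le`). This is a Delsarte-type bound in the form given to
it by Musin. The polynomial `aux` has nonnegative Legendre coefficients and constant coefficient
`1`, so its double sum over `V` is at least `|V|²`. Each row sum is less than `13` (`row_sum_lt`):
the diagonal term is `aux 1 = 10.576`, `aux` is nonpositive on `[-442/625, 1/2]`, and the at most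
three points in the remaining cap, opposite to the given point, contribute at most `2.419`
(`cap_sum_le`). Hence `|V| < 13`.

**At most 24 contacts** (`Kissing.sum_dg_le`, where the degree sum is bounded by `48`). A vector has
at most five contacts, since seen from it they are at mutual angles at least `arccos (1/3)`. If all
degrees are at most four, the degree sum is at most `12 * 4`. Otherwise some `v` has a set `A` of
five contacts, and these leave no gap: every direction at `v` is within `arccos (7/9)` of one of
them (`covering`). This pushes the set `L` of the at most six remaining vectors down to
`⟪v, l⟫ ≤ -11/38` (`FiveStar.far`). Seen from `v`, those of them with `⟪v, l⟫ ≥ -1/2`, in particular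
all that touch `A`, are more than `60°` apart, so this belt has at most five members and few
contacts. Sorting `L` by the number of contacts in `A` (two, one or none), a count of edges
(`count_le`) bounds twice the number of contacts between `L` and `A` plus the degree sum within `L`
by `31` (`FiveStar.sum_L_le`). The degree sum within `A` is at most `8`, because five steps of
`arccos (1/3)` do not close up (`FiveStar.sum_A_le`), and `v` accounts for `10`. The total is at
most `49`, and being even it is at most `48`.
-/

open scoped BigOperators
open scoped Classical

noncomputable section

abbrev E3 := EuclideanSpace ℝ (Fin 3)

/-- The nearest neighborhood `N(x) = {x' ∈ X : x' ≠ x, ||y(x')−y(x)| − 1| ≤ α}`. -/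
def nbhd {ι : Type*} (α : ℝ) (X : Finset ι) (y : ι → E3) (x : ι) : Set ι :=
  {x' | x' ∈ X ∧ x' ≠ x ∧ |‖y x' - y x‖ - 1| ≤ α}

/-- The set `A(x)` of ordered pairs of distinct nearest neighbors of `x` which are themselves
at near-unit distance. -/
def nbhdEdges {ι : Type*} (α : ℝ) (X : Finset ι) (y : ι → E3) (x : ι) : Set (ι × ι) :=
  {p | p.1 ∈ nbhd α X y x ∧ p.2 ∈ nbhd α X y x ∧ p.1 ≠ p.2 ∧ |‖y p.1 - y p.2‖ - 1| ≤ α}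

set_option linter.unusedSimpArgs false

/-! ### Planar packing -/

/-- Angular pigeonhole in the plane: nonzero complex numbers at mutual angles at least `arccos κ`
that all avoid the closed sector of half-angle `arccos c` around `d` number at most `k` once the
complementary sector is no longer than `k` steps. -/
lemma planar_card_le {ι : Type*} (S : Finset ι) (w : ι → ℂ) (d : ℂ) (κ c : ℝ) (k : ℕ)
    (hκ : κ < 1) (hd : d ≠ 0) (hw : ∀ y ∈ S, w y ≠ 0)
    (hsep : ∀ y ∈ S, ∀ z ∈ S, y ≠ z →
      (w y * (starRingEnd ℂ) (w z)).re ≤ κ * (‖w y‖ * ‖w z‖))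
    (hdir : ∀ y ∈ S, (d * (starRingEnd ℂ) (w y)).re < c * (‖d‖ * ‖w y‖))
    (hc : -1 ≤ c ∧ c ≤ 1)
    (hk : 2 * Real.pi - 2 * Real.arccos c ≤ k * Real.arccos κ) : S.card ≤ k := by
  set τ := Real.arccos κ with hτ
  set δ := Real.arccos c with hδ
  have hτ0 : 0 < τ := Real.arccos_pos.2 hκ
  have hτπ : τ ≤ Real.pi := Real.arccos_le_pi κ
  have hδ0 : 0 ≤ δ := Real.arccos_nonneg c
  have hδπ : δ ≤ Real.pi := Real.arccos_le_pi c
  have hcδ : Real.cos δ = c := Real.cos_arccos hc.1 hc.2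
  -- angles are measured from the direction `-d`
  let θ : ι → ℝ := fun y => (-(w y) * (starRingEnd ℂ) d).arg
  have hz : ∀ y ∈ S, -(w y) * (starRingEnd ℂ) d ≠ 0 := fun y hy =>
    mul_ne_zero (neg_ne_zero.2 (hw y hy)) ((map_ne_zero _).2 hd)
  have hnz : ∀ y, ‖-(w y) * (starRingEnd ℂ) d‖ = ‖w y‖ * ‖d‖ := fun y => by simp
  have hdpos : 0 < ‖d‖ := norm_pos_iff.2 hd
  have hθ : ∀ y ∈ S, |θ y| < Real.pi - δ := by
    intro y hy
    have hwpos : 0 < ‖w y‖ := norm_pos_iff.2 (hw y hy)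
    have h1 : Real.cos (θ y) = (-(w y) * (starRingEnd ℂ) d).re / ‖-(w y) * (starRingEnd ℂ) d‖ :=
      Complex.cos_arg (hz y hy)
    have h2 : (-(w y) * (starRingEnd ℂ) d).re = -(d * (starRingEnd ℂ) (w y)).re := by
      simp; ring
    have h3 : -c < Real.cos (θ y) := by
      rw [h1, h2, hnz, lt_div_iff₀ (by positivity)]
      have := hdir y hy
      linarith [mul_comm ‖w y‖ ‖d‖, congrArg (fun t => c * t) (mul_comm ‖w y‖ ‖d‖)]
    by_contra hcon
    push Not at hcon
    have h4 : Real.cos |θ y| ≤ Real.cos (Real.pi - δ) :=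
      Real.cos_le_cos_of_nonneg_of_le_pi (by linarith) (Complex.abs_arg_le_pi _) hcon
    rw [Real.cos_abs, Real.cos_pi_sub, hcδ] at h4
    linarith
  have hsepθ : ∀ y ∈ S, ∀ z ∈ S, y ≠ z → τ ≤ |θ y - θ z| := by
    intro y hy z hz' hyz
    have hwy : 0 < ‖w y‖ := norm_pos_iff.2 (hw y hy)
    have hwz : 0 < ‖w z‖ := norm_pos_iff.2 (hw z hz')
    have ey := Complex.norm_mul_cos_arg (-(w y) * (starRingEnd ℂ) d)
    have ey' := Complex.norm_mul_sin_arg (-(w y) * (starRingEnd ℂ) d)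
    have ez := Complex.norm_mul_cos_arg (-(w z) * (starRingEnd ℂ) d)
    have ez' := Complex.norm_mul_sin_arg (-(w z) * (starRingEnd ℂ) d)
    rw [hnz] at ey ey' ez ez'
    have hnd : ‖d‖ ^ 2 = d.re ^ 2 + d.im ^ 2 := by
      rw [Complex.sq_norm, Complex.normSq_apply]; ring
    have h1 : (w y * (starRingEnd ℂ) (w z)).re * ‖d‖ ^ 2 =
        (‖w y‖ * ‖w z‖ * Real.cos (θ y - θ z)) * ‖d‖ ^ 2 := by
      have : (‖w y‖ * ‖w z‖ * Real.cos (θ y - θ z)) * ‖d‖ ^ 2 =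
        (‖w y‖ * ‖d‖ * Real.cos (θ y)) * (‖w z‖ * ‖d‖ * Real.cos (θ z)) +
        (‖w y‖ * ‖d‖ * Real.sin (θ y)) * (‖w z‖ * ‖d‖ * Real.sin (θ z)) := by
        rw [Real.cos_sub]; ring
      rw [this, ey, ey', ez, ez', hnd]
      simp; ring
    have h2 := mul_right_cancel₀ (by positivity) h1
    have h3 : Real.cos (θ y - θ z) ≤ κ := by
      have := hsep y hy z hz' hyz
      rw [h2, mul_comm κ] at this
      exact le_of_mul_le_mul_left this (by positivity)
    by_contra hcon
    push Not at hcon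
    have h4 : Real.cos τ < Real.cos |θ y - θ z| :=
      Real.cos_lt_cos_of_nonneg_of_le_pi (abs_nonneg _) hτπ hcon
    rw [Real.cos_abs] at h4
    rcases le_or_gt (-1) κ with h5 | h5
    · rw [hτ, Real.cos_arccos h5 hκ.le] at h4; linarith
    · linarith [Real.neg_one_le_cos (θ y - θ z)]
  let F : ι → ℕ := fun y => ⌊(θ y + (Real.pi - δ)) / τ⌋₊
  have hnn : ∀ y ∈ S, 0 ≤ (θ y + (Real.pi - δ)) / τ := fun y hy =>
    div_nonneg (by linarith [(abs_lt.1 (hθ y hy)).1]) hτ0.le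
  have hF : ∀ y ∈ S, F y ∈ Finset.range k := by
    intro y hy
    rw [Finset.mem_range, Nat.floor_lt (hnn y hy), div_lt_iff₀ hτ0]
    linarith [(abs_lt.1 (hθ y hy)).2]
  have hinj : Set.InjOn F (S : Set ι) := by
    intro y hy z hz' h
    by_contra hne
    have h1 := hsepθ y hy z hz' hne
    have a1 := Nat.floor_le (hnn y hy)
    have a2 := Nat.lt_floor_add_one ((θ y + (Real.pi - δ)) / τ)
    have b1 := Nat.floor_le (hnn z hz')
    have b2 := Nat.lt_floor_add_one ((θ z + (Real.pi - δ)) / τ)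
    have hh : (⌊(θ y + (Real.pi - δ)) / τ⌋₊ : ℝ) = ⌊(θ z + (Real.pi - δ)) / τ⌋₊ := by
      exact_mod_cast h
    rw [hh] at a1 a2
    rw [le_div_iff₀ hτ0] at a1 b1
    rw [div_lt_iff₀ hτ0] at a2 b2
    have : |θ y - θ z| < τ := by rw [abs_lt]; constructor <;> nlinarith
    linarith
  simpa using Finset.card_le_card_of_injOn F hF hinj

/-! ### Projection along a pole -/

/-- The inner product of the projections of `y` and `z` to the plane orthogonal to the unit
vector `v`. -/
def pr (v y z : E3) : ℝ := inner ℝ y z - inner ℝ v y * inner ℝ v z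

lemma pr_comm (v y z : E3) : pr v y z = pr v z y := by
  unfold pr; rw [real_inner_comm]; ring

/-- The plane orthogonal to a unit vector can be identified with `ℂ`. -/
lemma exists_planar_coord (v : E3) (hv : ‖v‖ = 1) :
    ∃ w : E3 → ℂ, ∀ y z, pr v y z = (w y * (starRingEnd ℂ) (w z)).re := by
  have horth : Orthonormal ℝ (Set.domRestrict ({0} : Set (Fin 3)) (fun _ => v)) := by
    constructor
    · intro i; exact hv
    · intro i j hij
      exact absurd (Subsingleton.elim i j) hij
  obtain ⟨b, hb⟩ := horth.exists_orthonormalBasis_extension_of_card_eq (ι := Fin 3) (by simp)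
  have hb0 : b 0 = v := hb 0 (by simp)
  refine ⟨fun y => ⟨inner ℝ (b 1) y, inner ℝ (b 2) y⟩, fun y z => ?_⟩
  have := b.sum_inner_mul_inner y z
  rw [Fin.sum_univ_three, hb0] at this
  unfold pr
  rw [← this]
  simp [real_inner_comm]
  ring

/-- `planar_card_le` for the directions in which the members of `S` are seen from the pole `v`. -/
lemma card_le_of_pole (v : E3) (hv : ‖v‖ = 1) (S : Finset E3) (d : E3) (κ c : ℝ) (k : ℕ)
    (hκ : κ < 1) (hd : 0 < pr v d d) (hw : ∀ y ∈ S, 0 < pr v y y)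
    (hsep : ∀ y ∈ S, ∀ z ∈ S, y ≠ z → pr v y z ≤ κ * (√(pr v y y) * √(pr v z z)))
    (hdir : ∀ y ∈ S, pr v d y < c * (√(pr v d d) * √(pr v y y)))
    (hc : -1 ≤ c ∧ c ≤ 1)
    (hk : 2 * Real.pi - 2 * Real.arccos c ≤ k * Real.arccos κ) : S.card ≤ k := by
  obtain ⟨w, h⟩ := exists_planar_coord v hv
  have hn : ∀ y, pr v y y = ‖w y‖ ^ 2 := fun y => by
    rw [h, Complex.mul_conj, Complex.ofReal_re, Complex.normSq_eq_norm_sq]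
  have hs : ∀ y, √(pr v y y) = ‖w y‖ := fun y => by rw [hn, Real.sqrt_sq (norm_nonneg _)]
  have h0 : ∀ y, 0 < pr v y y → w y ≠ 0 := fun y hy h0 => by
    rw [hn, h0] at hy; simp at hy
  refine planar_card_le S w (w d) κ c k hκ (h0 d hd) (fun y hy => h0 y (hw y hy)) ?_ ?_ hc hk
  · intro y hy z hz hyz
    rw [← h, ← hs, ← hs]; exact hsep y hy z hz hyz
  · intro y hy
    rw [← h, ← hs, ← hs]; exact hdir y hy

lemma arccos_half : Real.arccos (1 / 2) = Real.pi / 3 := by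
  rw [← Real.cos_pi_div_three]
  exact Real.arccos_cos (by positivity) (by linarith [Real.pi_pos])

/-- `arccos (7/9) = π - 2 arccos (1/3)`. -/
lemma arccos_seven_ninths : 2 * Real.pi - 2 * Real.arccos (7 / 9) ≤
    (4 : ℕ) * Real.arccos (1 / 3) := by
  have h1 : Real.arccos (7 / 9) = Real.pi - 2 * Real.arccos (1 / 3) := by
    have h2 : Real.cos (Real.pi - 2 * Real.arccos (1 / 3)) = 7 / 9 := by
      rw [Real.cos_pi_sub, Real.cos_two_mul, Real.cos_arccos (by norm_num) (by norm_num)]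
      norm_num
    have h3 : Real.arccos (1 / 3) ≤ Real.pi / 2 := Real.arccos_le_pi_div_two.2 (by norm_num)
    rw [← h2, Real.arccos_cos (by linarith) (by
      linarith [Real.arccos_nonneg (1 / 3), Real.pi_pos])]
  rw [h1]; push_cast; linarith

lemma pr_cauchy (v : E3) (hv : ‖v‖ = 1) (y z : E3) :
    pr v y z ^ 2 ≤ pr v y y * pr v z z := by
  obtain ⟨w, h⟩ := exists_planar_coord v hv
  simp only [h, Complex.mul_re, Complex.conj_re, Complex.conj_im]
  nlinarith [sq_nonneg ((w y).re * (w z).im - (w y).im * (w z).re)]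

lemma pr_self_nonneg (v : E3) (hv : ‖v‖ = 1) (y : E3) : 0 ≤ pr v y y := by
  obtain ⟨w, h⟩ := exists_planar_coord v hv
  simp only [h, Complex.mul_re, Complex.conj_re, Complex.conj_im]
  nlinarith [sq_nonneg (w y).re, sq_nonneg (w y).im]

lemma pr_self_pos_of_ne (v : E3) (hv : ‖v‖ = 1) (y z : E3) (h : pr v y z ≠ 0) :
    0 < pr v y y := by
  refine lt_of_le_of_ne (pr_self_nonneg v hv y) fun h0 => ?_
  have := pr_cauchy v hv y z
  rw [← h0, zero_mul] at this
  exact h (by nlinarith [sq_nonneg (pr v y z)])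

/-- Directions at mutual angles at least `60°` in an open half-plane: at most three. -/
lemma card_le_three_of_half (v : E3) (hv : ‖v‖ = 1) (S : Finset E3) (d : E3)
    (hdir : ∀ y ∈ S, pr v d y < 0)
    (hsep : ∀ y ∈ S, ∀ z ∈ S, y ≠ z → pr v y z ≤ 1 / 2 * (√(pr v y y) * √(pr v z z))) :
    S.card ≤ 3 := by
  rcases S.eq_empty_or_nonempty with h | ⟨y0, hy0⟩
  · simp [h]
  refine card_le_of_pole v hv S d (1 / 2) 0 3 (by norm_num)
    (pr_self_pos_of_ne v hv d y0 (hdir y0 hy0).ne)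
    (fun y hy => pr_self_pos_of_ne v hv y d (by rw [pr_comm]; exact (hdir y hy).ne))
    hsep (fun y hy => by simpa using hdir y hy) (by norm_num) ?_
  rw [arccos_half, Real.arccos_zero]; push_cast; linarith

/-- Pairwise obtuse directions in a plane: at most three. -/
lemma card_le_three_of_obtuse (v : E3) (hv : ‖v‖ = 1) (S : Finset E3)
    (hpos : ∀ y ∈ S, 0 < pr v y y)
    (hsep : ∀ y ∈ S, ∀ z ∈ S, y ≠ z → pr v y z < 0) : S.card ≤ 3 := by
  rcases S.eq_empty_or_nonempty with h | ⟨y0, hy0⟩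
  · simp [h]
  have : (S.erase y0).card ≤ 2 := by
    refine card_le_of_pole v hv (S.erase y0) y0 0 0 2 (by norm_num) (hpos y0 hy0)
      (fun y hy => hpos y (Finset.mem_of_mem_erase hy))
      (fun y hy z hz h => by
        simpa using (hsep y (Finset.mem_of_mem_erase hy) z (Finset.mem_of_mem_erase hz) h).le)
      (fun y hy => by
        simpa using hsep y0 hy0 y (Finset.mem_of_mem_erase hy) (Finset.ne_of_mem_erase hy).symm)
      (by norm_num) ?_
    rw [Real.arccos_zero]; push_cast; linarith
  rw [Finset.card_erase_of_mem hy0] at this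
  omega

/-- Directions in a plane at mutual angles strictly more than `60°`: at most five. -/
lemma card_le_five (v : E3) (hv : ‖v‖ = 1) (S : Finset E3)
    (hpos : ∀ y ∈ S, 0 < pr v y y)
    (hsep : ∀ y ∈ S, ∀ z ∈ S, y ≠ z → pr v y z < 1 / 2 * (√(pr v y y) * √(pr v z z))) :
    S.card ≤ 5 := by
  rcases S.eq_empty_or_nonempty with h | ⟨y0, hy0⟩
  · simp [h]
  have : (S.erase y0).card ≤ 4 := by
    refine card_le_of_pole v hv (S.erase y0) y0 (1 / 2) (1 / 2) 4 (by norm_num) (hpos y0 hy0)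
      (fun y hy => hpos y (Finset.mem_of_mem_erase hy))
      (fun y hy z hz h =>
        (hsep y (Finset.mem_of_mem_erase hy) z (Finset.mem_of_mem_erase hz) h).le)
      (fun y hy =>
        hsep y0 hy0 y (Finset.mem_of_mem_erase hy) (Finset.ne_of_mem_erase hy).symm)
      (by norm_num) ?_
    rw [arccos_half]; push_cast; linarith
  rw [Finset.card_erase_of_mem hy0] at this
  omega

/-- A family of unit vectors at mutual angles at least `60°`: the contact points of
non-overlapping unit balls touching a central one. -/
def Kissing (V : Finset E3) : Prop :=
  (∀ y ∈ V, ‖y‖ = 1) ∧ ∀ y ∈ V, ∀ z ∈ V, y ≠ z → inner ℝ y z ≤ (1 / 2 : ℝ)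

lemma inner_self_one {y : E3} (h : ‖y‖ = 1) : inner ℝ y y = (1 : ℝ) := by
  rw [real_inner_self_eq_norm_sq, h]; norm_num

lemma pr_self {v y : E3} (h : ‖y‖ = 1) : pr v y y = 1 - inner ℝ v y ^ 2 := by
  unfold pr; rw [inner_self_one h]; ring

/-! ### Positive definite zonal kernels -/

/-- `cosPoly m q p` is `Re (z ^ m)` for a complex number with real part `q` and squared
modulus `p`. -/
def cosPoly : ℕ → ℝ → ℝ → ℝ
  | 0, _, _ => 1
  | 1, q, _ => q
  | m + 2, q, p => 2 * q * cosPoly (m + 1) q p - p * cosPoly m q p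

lemma cosPoly_eq (z : ℂ) : ∀ m : ℕ, cosPoly m z.re (Complex.normSq z) = (z ^ m).re
  | 0 => by simp [cosPoly]
  | 1 => by simp [cosPoly]
  | m + 2 => by
    rw [cosPoly, cosPoly_eq z (m + 1), cosPoly_eq z m, pow_succ z (m + 1), pow_succ z m,
      Complex.normSq_apply]
    simp only [Complex.mul_re, Complex.mul_im]
    ring

/-- In longitude coordinates this kernel is `a(y) a(z) r(y)^m r(z)^m cos (m (φ(y) - φ(z)))`, the real
part of a Gram kernel. -/
lemma cosPoly_kernel_nonneg (S : Finset E3) (hS : ∀ y ∈ S, ‖y‖ = 1) (a : ℝ → ℝ) (m : ℕ) :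
    0 ≤ ∑ y ∈ S, ∑ z ∈ S, a (y 0) * a (z 0) *
      cosPoly m (y 1 * z 1 + y 2 * z 2) ((1 - y 0 ^ 2) * (1 - z 0 ^ 2)) := by
  have hn : ∀ y ∈ S, 1 - y 0 ^ 2 = y 1 ^ 2 + y 2 ^ 2 := by
    intro y hy
    have h := EuclideanSpace.real_norm_sq_eq y
    rw [hS y hy, Fin.sum_univ_three] at h
    linarith
  have key : ∑ y ∈ S, ∑ z ∈ S, a (y 0) * a (z 0) *
      cosPoly m (y 1 * z 1 + y 2 * z 2) ((1 - y 0 ^ 2) * (1 - z 0 ^ 2)) =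
      ((∑ y ∈ S, (a (y 0) : ℂ) * (⟨y 1, y 2⟩ : ℂ) ^ m) *
        (starRingEnd ℂ) (∑ y ∈ S, (a (y 0) : ℂ) * (⟨y 1, y 2⟩ : ℂ) ^ m)).re := by
    rw [map_sum, Finset.sum_mul_sum, Complex.re_sum]
    refine Finset.sum_congr rfl fun y hy => ?_
    rw [Complex.re_sum]
    refine Finset.sum_congr rfl fun z hz => ?_
    have e1 : y 1 * z 1 + y 2 * z 2 = ((⟨y 1, y 2⟩ : ℂ) * (starRingEnd ℂ) ⟨z 1, z 2⟩).re := by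
      simp
    have e2 : (1 - y 0 ^ 2) * (1 - z 0 ^ 2) =
        Complex.normSq ((⟨y 1, y 2⟩ : ℂ) * (starRingEnd ℂ) ⟨z 1, z 2⟩) := by
      rw [map_mul, Complex.normSq_conj, Complex.normSq_mk, Complex.normSq_mk, hn y hy, hn z hz]
      ring
    rw [e1, e2, cosPoly_eq, mul_pow, map_mul, map_pow, Complex.conj_ofReal]
    have e3 : (a (y 0) : ℂ) * (⟨y 1, y 2⟩ : ℂ) ^ m *
        ((a (z 0) : ℂ) * (starRingEnd ℂ) (⟨z 1, z 2⟩ : ℂ) ^ m) =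
        ((a (y 0) * a (z 0) : ℝ) : ℂ) *
          ((⟨y 1, y 2⟩ : ℂ) ^ m * (starRingEnd ℂ) (⟨z 1, z 2⟩ : ℂ) ^ m) := by
      push_cast; ring
    rw [e3, Complex.re_ofReal_mul]
  rw [key, Complex.mul_conj, Complex.ofReal_re]
  exact Complex.normSq_nonneg _

/-- A zonal polynomial kernel on the sphere with an addition formula with nonnegative
coefficients is positive definite. -/
lemma zonal_nonneg {n : ℕ} (P : ℝ → ℝ) (c : Fin n → ℝ) (D : Fin n → ℝ → ℝ)
    (hc : ∀ m, 0 ≤ c m)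
    (hadd : ∀ u v q, P (u * v + q) = ∑ m : Fin n, c m * (D m u * D m v *
      cosPoly m q ((1 - u ^ 2) * (1 - v ^ 2))))
    (S : Finset E3) (hS : ∀ y ∈ S, ‖y‖ = 1) :
    0 ≤ ∑ y ∈ S, ∑ z ∈ S, P (inner ℝ y z) := by
  have h : ∑ y ∈ S, ∑ z ∈ S, P (inner ℝ y z) = ∑ m : Fin n, c m *
      ∑ y ∈ S, ∑ z ∈ S, D m (y 0) * D m (z 0) *
        cosPoly m (y 1 * z 1 + y 2 * z 2) ((1 - y 0 ^ 2) * (1 - z 0 ^ 2)) := by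
    simp only [Finset.mul_sum]
    conv_rhs => rw [Finset.sum_comm]
    refine Finset.sum_congr rfl fun y _ => ?_
    conv_rhs => rw [Finset.sum_comm]
    refine Finset.sum_congr rfl fun z _ => ?_
    rw [← hadd]
    congr 1
    simp only [PiLp.inner_apply, Fin.sum_univ_three]
    simp
    ring
  rw [h]
  exact Finset.sum_nonneg fun m _ => mul_nonneg (hc m) (cosPoly_kernel_nonneg S hS (D m) m)


/-- The Legendre polynomial of degree 1. -/
def leg1 (t : ℝ) : ℝ := t

/-- The Legendre polynomial of degree 2. -/
def leg2 (t : ℝ) : ℝ := 3 / 2 * t ^ 2 - 1 / 2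

/-- The Legendre polynomial of degree 3. -/
def leg3 (t : ℝ) : ℝ := 5 / 2 * t ^ 3 - 3 / 2 * t

/-- The Legendre polynomial of degree 4. -/
def leg4 (t : ℝ) : ℝ := 35 / 8 * t ^ 4 - 15 / 4 * t ^ 2 + 3 / 8

/-- The Legendre polynomial of degree 5. -/
def leg5 (t : ℝ) : ℝ := 63 / 8 * t ^ 5 - 35 / 4 * t ^ 3 + 15 / 8 * t

/-- The Legendre polynomial of degree 9. -/
def leg9 (t : ℝ) : ℝ := 12155 / 128 * t ^ 9 - 6435 / 32 * t ^ 7 + 9009 / 64 * t ^ 5 - 1155 / 32 * t ^ 3 + 315 / 128 * t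

/-- The Legendre polynomials are positive definite zonal kernels; here and for the other degrees the
data passed to `zonal_nonneg` are those of the addition theorem. -/
lemma leg1_nonneg (S : Finset E3) (hS : ∀ y ∈ S, ‖y‖ = 1) :
    0 ≤ ∑ y ∈ S, ∑ z ∈ S, leg1 (inner ℝ y z) := by
  refine zonal_nonneg leg1 ![1, 1]
    ![fun u => u,
      fun _ => 1] ?_ ?_ S hS
  · intro m; fin_cases m <;> norm_num
  · intro u v q
    simp only [Fin.sum_univ_succ, Fin.sum_univ_zero, cosPoly, leg1, Matrix.cons_val_zero,
      Matrix.cons_val_succ, Fin.val_zero, Fin.val_succ, zero_add, Nat.reduceAdd]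
    ring

lemma leg2_nonneg (S : Finset E3) (hS : ∀ y ∈ S, ‖y‖ = 1) :
    0 ≤ ∑ y ∈ S, ∑ z ∈ S, leg2 (inner ℝ y z) := by
  refine zonal_nonneg leg2 ![1 / 4, 3, 3 / 4]
    ![fun u => 3 * u ^ 2 - 1,
      fun u => u,
      fun _ => 1] ?_ ?_ S hS
  · intro m; fin_cases m <;> norm_num
  · intro u v q
    simp only [Fin.sum_univ_succ, Fin.sum_univ_zero, cosPoly, leg2, Matrix.cons_val_zero,
      Matrix.cons_val_succ, Fin.val_zero, Fin.val_succ, zero_add, Nat.reduceAdd]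
    ring

lemma leg3_nonneg (S : Finset E3) (hS : ∀ y ∈ S, ‖y‖ = 1) :
    0 ≤ ∑ y ∈ S, ∑ z ∈ S, leg3 (inner ℝ y z) := by
  refine zonal_nonneg leg3 ![1 / 4, 3 / 8, 15 / 4, 5 / 8]
    ![fun u => 5 * u ^ 3 - 3 * u,
      fun u => 5 * u ^ 2 - 1,
      fun u => u,
      fun _ => 1] ?_ ?_ S hS
  · intro m; fin_cases m <;> norm_num
  · intro u v q
    simp only [Fin.sum_univ_succ, Fin.sum_univ_zero, cosPoly, leg3, Matrix.cons_val_zero,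
      Matrix.cons_val_succ, Fin.val_zero, Fin.val_succ, zero_add, Nat.reduceAdd]
    ring

lemma leg4_nonneg (S : Finset E3) (hS : ∀ y ∈ S, ‖y‖ = 1) :
    0 ≤ ∑ y ∈ S, ∑ z ∈ S, leg4 (inner ℝ y z) := by
  refine zonal_nonneg leg4 ![1 / 64, 5 / 8, 5 / 16, 35 / 8, 35 / 64]
    ![fun u => 35 * u ^ 4 - 30 * u ^ 2 + 3,
      fun u => 7 * u ^ 3 - 3 * u,
      fun u => 7 * u ^ 2 - 1,
      fun u => u,
      fun _ => 1] ?_ ?_ S hS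
  · intro m; fin_cases m <;> norm_num
  · intro u v q
    simp only [Fin.sum_univ_succ, Fin.sum_univ_zero, cosPoly, leg4, Matrix.cons_val_zero,
      Matrix.cons_val_succ, Fin.val_zero, Fin.val_succ, zero_add, Nat.reduceAdd]
    ring

lemma leg5_nonneg (S : Finset E3) (hS : ∀ y ∈ S, ‖y‖ = 1) :
    0 ≤ ∑ y ∈ S, ∑ z ∈ S, leg5 (inner ℝ y z) := by
  refine zonal_nonneg leg5 ![1 / 64, 15 / 64, 105 / 16, 35 / 128, 315 / 64, 63 / 128]
    ![fun u => 63 * u ^ 5 - 70 * u ^ 3 + 15 * u,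
      fun u => 21 * u ^ 4 - 14 * u ^ 2 + 1,
      fun u => 3 * u ^ 3 - u,
      fun u => 9 * u ^ 2 - 1,
      fun u => u,
      fun _ => 1] ?_ ?_ S hS
  · intro m; fin_cases m <;> norm_num
  · intro u v q
    simp only [Fin.sum_univ_succ, Fin.sum_univ_zero, cosPoly, leg5, Matrix.cons_val_zero,
      Matrix.cons_val_succ, Fin.val_zero, Fin.val_succ, zero_add, Nat.reduceAdd]
    ring

lemma leg9_nonneg (S : Finset E3) (hS : ∀ y ∈ S, ‖y‖ = 1) :
    0 ≤ ∑ y ∈ S, ∑ z ∈ S, leg9 (inner ℝ y z) := by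
  refine zonal_nonneg leg9 ![1 / 16384, 45 / 16384, 495 / 2048, 1155 / 8192, 45045 / 4096, 1287 / 8192, 2145 / 2048, 6435 / 32768, 109395 / 16384, 12155 / 32768]
    ![fun u => 12155 * u ^ 9 - 25740 * u ^ 7 + 18018 * u ^ 5 - 4620 * u ^ 3 + 315 * u,
      fun u => 2431 * u ^ 8 - 4004 * u ^ 6 + 2002 * u ^ 4 - 308 * u ^ 2 + 7,
      fun u => 221 * u ^ 7 - 273 * u ^ 5 + 91 * u ^ 3 - 7 * u,
      fun u => 221 * u ^ 6 - 195 * u ^ 4 + 39 * u ^ 2 - 1,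
      fun u => 17 * u ^ 5 - 10 * u ^ 3 + u,
      fun u => 85 * u ^ 4 - 30 * u ^ 2 + 1,
      fun u => 17 * u ^ 3 - 3 * u,
      fun u => 17 * u ^ 2 - 1,
      fun u => u,
      fun _ => 1] ?_ ?_ S hS
  · intro m; fin_cases m <;> norm_num
  · intro u v q
    simp only [Fin.sum_univ_succ, Fin.sum_univ_zero, cosPoly, leg9, Matrix.cons_val_zero,
      Matrix.cons_val_succ, Fin.val_zero, Fin.val_succ, zero_add, Nat.reduceAdd]
    ring

/-! ### The auxiliary polynomial and its bounds -/

/-- The auxiliary polynomial: nonnegative Legendre coefficients, nonpositive on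
`[-442/625, 1/2]`. -/
def aux (t : ℝ) : ℝ :=
  1 + 3651 / 2000 * leg1 t + 35007 / 10000 * leg2 t + 18231 / 10000 * leg3 t + 1247 / 625 * leg4 t + 399 / 10000 * leg5 t + 979 / 2500 * leg9 t

lemma aux_sum_ge (S : Finset E3) (hS : ∀ y ∈ S, ‖y‖ = 1) :
    (S.card : ℝ) ^ 2 ≤ ∑ y ∈ S, ∑ z ∈ S, aux (inner ℝ y z) := by
  have h : ∑ y ∈ S, ∑ z ∈ S, aux (inner ℝ y z) = (S.card : ℝ) ^ 2 +
      3651 / 2000 * ∑ y ∈ S, ∑ z ∈ S, leg1 (inner ℝ y z) +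
      35007 / 10000 * ∑ y ∈ S, ∑ z ∈ S, leg2 (inner ℝ y z) +
      18231 / 10000 * ∑ y ∈ S, ∑ z ∈ S, leg3 (inner ℝ y z) +
      1247 / 625 * ∑ y ∈ S, ∑ z ∈ S, leg4 (inner ℝ y z) +
      399 / 10000 * ∑ y ∈ S, ∑ z ∈ S, leg5 (inner ℝ y z) +
      979 / 2500 * ∑ y ∈ S, ∑ z ∈ S, leg9 (inner ℝ y z) := by
    simp only [aux, Finset.sum_add_distrib, Finset.mul_sum, Finset.sum_const, nsmul_eq_mul]
    ring
  rw [h]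
  nlinarith [leg1_nonneg S hS, leg2_nonneg S hS, leg3_nonneg S hS, leg4_nonneg S hS, leg5_nonneg S hS, leg9_nonneg S hS]

/-- Nonnegativity of a polynomial of degree at most nine with nonnegative Bernstein
coefficients on `[l, h]`. -/
lemma bernstein_form_nonneg (l h t : ℝ) (b : Fin 10 → ℝ) (hb : ∀ k, 0 ≤ b k) (h1 : l ≤ t)
    (h2 : t ≤ h) : 0 ≤ ∑ k : Fin 10, b k * ((t - l) ^ (k : ℕ) * (h - t) ^ (9 - (k : ℕ))) :=
  Finset.sum_nonneg fun k _ => mul_nonneg (hb k)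
    (mul_nonneg (pow_nonneg (by linarith) _) (pow_nonneg (by linarith) _))

/-- The certificates here and below are Bernstein coefficients on a subdivision of the interval. -/
lemma aux_nonpos {t : ℝ} (h1 : -442 / 625 ≤ t) (h2 : t ≤ 1 / 2) : aux t ≤ 0 := by
  rcases le_total t (-81 / 200) with h3 | h3
  · have := bernstein_form_nonneg (-442 / 625) (-81 / 200) t ![121591861411255799271387451359232 / 5132041883357942253194230148875, 7843139174208996377105615282536448 / 205281675334317690127769205955, 8405266452207332798868958469980160 / 41056335066863538025553841191, 18015397692819997395688595568896000 / 41056335066863538025553841191, 19975002157638313849535356525600000 / 41056335066863538025553841191, 12176131548233456832703468471250000 / 41056335066863538025553841191, 3903226715712571523492884078125000 / 41056335066863538025553841191, 1060768775932054561749406201171875 / 82112670133727076051107682382, 273561718641750215406251220703125 / 1313802722139633216817722918112, 485709082752074967798736572265625 / 21020843554234131469083566689792]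
      (by intro k; fin_cases k <;> norm_num) h1 h3
    simp only [Fin.sum_univ_succ, Fin.sum_univ_zero, Matrix.cons_val_zero, Matrix.cons_val_succ,
      Fin.val_zero, Fin.val_succ, zero_add, Nat.reduceAdd, Nat.reduceSub] at this
    unfold aux leg1 leg2 leg3 leg4 leg5 leg9; linear_combination this
  clear h1; rename' h3 => h1
  rcases le_total t (-21 / 200) with h3 | h3
  · have := bernstein_form_nonneg (-81 / 200) (-21 / 200) t ![15915715223619992544829 / 644972544000000000000, 15895453881168414778289 / 71663616000000000000, 81247135177617942057383 / 5971968000000000000, 4417153674098209749956863 / 53747712000000000000, 7344790320502007771855483 / 35831808000000000000, 1062935267655552636614767 / 3981312000000000000, 10501732103558749851301123 / 53747712000000000000, 1435844669611839170907449 / 17915904000000000000, 406453968643184890759903 / 23887872000000000000, 933065436661213877524369 / 644972544000000000000]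
      (by intro k; fin_cases k <;> norm_num) h1 h3
    simp only [Fin.sum_univ_succ, Fin.sum_univ_zero, Matrix.cons_val_zero, Matrix.cons_val_succ,
      Fin.val_zero, Fin.val_succ, zero_add, Nat.reduceAdd, Nat.reduceSub] at this
    unfold aux leg1 leg2 leg3 leg4 leg5 leg9; linear_combination this
  clear h1; rename' h3 => h1
  rcases le_total t (-3 / 100) with h3 | h3
  · have := bernstein_form_nonneg (-21 / 200) (-3 / 100) t ![933065436661213877524369 / 2460375000000000, 430745659672064339417767 / 136687500000000, 65462820452326246803227 / 5695312500000, 618221122404746685509681 / 25628906250000, 273819163347052116051383 / 8542968750000, 13248997032575641997641 / 474609375000, 50953819802638306446967 / 3203613281250, 3045757308606116962183 / 533935546875, 415117252822540357723 / 355957031250, 496966727690606496167 / 4805419921875]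
      (by intro k; fin_cases k <;> norm_num) h1 h3
    simp only [Fin.sum_univ_succ, Fin.sum_univ_zero, Matrix.cons_val_zero, Matrix.cons_val_succ,
      Fin.val_zero, Fin.val_succ, zero_add, Nat.reduceAdd, Nat.reduceSub] at this
    unfold aux leg1 leg2 leg3 leg4 leg5 leg9; linear_combination this
  clear h1; rename' h3 => h1
  rcases le_total t (1 / 100) with h3 | h3
  · have := bernstein_form_nonneg (-3 / 100) (1 / 100) t ![496966727690606496167 / 16777216000, 3869296621808079071499 / 16777216000, 3299311693119457216167 / 4194304000, 6457134671069577720759 / 4194304000, 15945886563857638759241 / 8388608000, 12850556492013842760253 / 8388608000, 3372314672509308191083 / 4194304000, 1110857250073967264131 / 4194304000, 836845355799884778623 / 16777216000, 69713382686996540051 / 16777216000]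
      (by intro k; fin_cases k <;> norm_num) h1 h3
    simp only [Fin.sum_univ_succ, Fin.sum_univ_zero, Matrix.cons_val_zero, Matrix.cons_val_succ,
      Fin.val_zero, Fin.val_succ, zero_add, Nat.reduceAdd, Nat.reduceSub] at this
    unfold aux leg1 leg2 leg3 leg4 leg5 leg9; linear_combination this
  clear h1; rename' h3 => h1
  rcases le_total t (1 / 20) with h3 | h3
  · have := bernstein_form_nonneg (1 / 100) (1 / 20) t ![69713382686996540051 / 16777216000, 83599106513210588459 / 3355443200, 10926304144252143659 / 167772160, 3678921260359027471 / 33554432, 10854019308282148065 / 67108864, 14966063565080180325 / 67108864, 7859981030585633875 / 33554432, 5270122816829786875 / 33554432, 7868683165768934375 / 134217728, 1243128577138296875 / 134217728]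
      (by intro k; fin_cases k <;> norm_num) h1 h3
    simp only [Fin.sum_univ_succ, Fin.sum_univ_zero, Matrix.cons_val_zero, Matrix.cons_val_succ,
      Fin.val_zero, Fin.val_succ, zero_add, Nat.reduceAdd, Nat.reduceSub] at this
    unfold aux leg1 leg2 leg3 leg4 leg5 leg9; linear_combination this
  clear h1; rename' h3 => h1
  rcases le_total t (1 / 5) with h3 | h3
  · have := bernstein_form_nonneg (1 / 20) (1 / 5) t ![79560228936851 / 1259712000, 126059652272153 / 104976000, 7703676837716 / 820125, 31191539164991 / 820125, 73756443396746 / 820125, 108042212014984 / 820125, 33204419527808 / 273375, 56346956061184 / 820125, 17876728131584 / 820125, 7308975603712 / 2460375]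
      (by intro k; fin_cases k <;> norm_num) h1 h3
    simp only [Fin.sum_univ_succ, Fin.sum_univ_zero, Matrix.cons_val_zero, Matrix.cons_val_succ,
      Fin.val_zero, Fin.val_succ, zero_add, Nat.reduceAdd, Nat.reduceSub] at this
    unfold aux leg1 leg2 leg3 leg4 leg5 leg9; linear_combination this
  clear h1; rename' h3 => h1
  have := bernstein_form_nonneg (1 / 5) (1 / 2) t ![14275342976 / 2460375, 11729423504 / 164025, 12240174932 / 32805, 261546770 / 243, 49285879525 / 26244, 106550916925 / 52488, 69693923875 / 52488, 25234728625 / 52488, 124222718125 / 1679616, 258846875 / 10077696]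
    (by intro k; fin_cases k <;> norm_num) h1 h2
  simp only [Fin.sum_univ_succ, Fin.sum_univ_zero, Matrix.cons_val_zero, Matrix.cons_val_succ,
      Fin.val_zero, Fin.val_succ, zero_add, Nat.reduceAdd, Nat.reduceSub] at this
  unfold aux leg1 leg2 leg3 leg4 leg5 leg9; linear_combination this

/-- The contribution of a single point in the cap opposite to the given one. -/
lemma aux_le_one {t : ℝ} (h1 : 442 / 625 ≤ t) (h2 : t ≤ 1) : aux (-t) ≤ 2419 / 1000 := by
  rcases le_total t (171 / 200) with h3 | h3
  · have := bernstein_form_nonneg (442 / 625) (171 / 200) t ![590697763736411255799271387451359232 / 8216937025546359231468632375, 208836680351507391710608057009799168 / 328677481021854369258745295, 163034925308801162001110330321960960 / 65735496204370873851749059, 368354848724382757912651390774016000 / 65735496204370873851749059, 529981619638884436936273231021600000 / 65735496204370873851749059, 502572725231537965154038886783750000 / 65735496204370873851749059, 313385773079990574630820415953125000 / 65735496204370873851749059, 247170377296390897944579770947265625 / 131470992408741747703498118, 892448986067517503532190821533203125 / 2103535878539867963255969888, 1401259377790012080835251434326171875 / 33656574056637887412095518208]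
      (by intro k; fin_cases k <;> norm_num) h1 h3
    simp only [Fin.sum_univ_succ, Fin.sum_univ_zero, Matrix.cons_val_zero, Matrix.cons_val_succ,
      Fin.val_zero, Fin.val_succ, zero_add, Nat.reduceAdd, Nat.reduceSub] at this
    unfold aux leg1 leg2 leg3 leg4 leg5 leg9; linear_combination this
  clear h1; rename' h3 => h1
  rcases le_total t (93 / 100) with h3 | h3
  · have := bernstein_form_nonneg (171 / 200) (93 / 100) t ![15305489097141038621603173 / 820125000000000, 21417522989854584147205177 / 136687500000000, 9908375252775723590322991 / 17085937500000, 3532123069437762050256119 / 2847656250000, 14415478301181733978966793 / 8542968750000, 6457788144752455376213519 / 4271484375000, 950924610645928708029059 / 1067871093750, 177175781601683440082713 / 533935546875, 75640224711502888552879 / 1067871093750, 10549424724545454016019 / 1601806640625]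
      (by intro k; fin_cases k <;> norm_num) h1 h3
    simp only [Fin.sum_univ_succ, Fin.sum_univ_zero, Matrix.cons_val_zero, Matrix.cons_val_succ,
      Fin.val_zero, Fin.val_succ, zero_add, Nat.reduceAdd, Nat.reduceSub] at this
    unfold aux leg1 leg2 leg3 leg4 leg5 leg9; linear_combination this
  clear h1; rename' h3 => h1
  rcases le_total t (193 / 200) with h3 | h3
  · have := bernstein_form_nonneg (93 / 100) (193 / 200) t ![31648274173636362048057 / 5044200875, 517825494395687826146613 / 10088401750, 934331747054268245620713 / 5044200875, 557230799085258131618271 / 1441200250, 2962783372126298351848913 / 5764801000, 5195357372143338394603013 / 11529602000, 3000513673131473000372371 / 11529602000, 15387081265031710849391213 / 161414428000, 25909399744802650817425313 / 1291315424000, 4768313725726284664802157 / 2582630848000]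
      (by intro k; fin_cases k <;> norm_num) h1 h3
    simp only [Fin.sum_univ_succ, Fin.sum_univ_zero, Matrix.cons_val_zero, Matrix.cons_val_succ,
      Fin.val_zero, Fin.val_succ, zero_add, Nat.reduceAdd, Nat.reduceSub] at this
    unfold aux leg1 leg2 leg3 leg4 leg5 leg9; linear_combination this
  clear h1; rename' h3 => h1
  have := bernstein_form_nonneg (193 / 200) (1) t ![4768313725726284664802157 / 2582630848000, 170054237867339111657941 / 12913154240, 1620776326740742799440 / 40353607, 391054512138220513000 / 5764801, 394452718540943100000 / 5764801, 237230752486620000000 / 5764801, 78901862608000000000 / 5764801, 82947591040000000000 / 40353607, 5239040000000000000 / 40353607, 1638400000000000000 / 40353607]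
    (by intro k; fin_cases k <;> norm_num) h1 h2
  simp only [Fin.sum_univ_succ, Fin.sum_univ_zero, Matrix.cons_val_zero, Matrix.cons_val_succ,
      Fin.val_zero, Fin.val_succ, zero_add, Nat.reduceAdd, Nat.reduceSub] at this
  unfold aux leg1 leg2 leg3 leg4 leg5 leg9; linear_combination this

/-- Half of the admissible total: two points of the cap at height at most about `√3/2` are harmless. -/
lemma aux_le_two {t : ℝ} (h1 : 442 / 625 ≤ t) (h2 : t ≤ 1733 / 2000) : aux (-t) ≤ 2419 / 2000 := by
  have := bernstein_form_nonneg (442 / 625) (1733 / 2000) t ![50416585011014187656408983458365308928 / 2752521630299499998982745866375, 3231167849580142112736318067482558464 / 20389049113329629622094413825, 7334702237702483642208516983700324352 / 12233429467997777773256648295, 9503740749906764028525903331471261696 / 7340057680798666663953988977, 1423169118480637590232536942571397120 / 815561964533185184883776553, 3678117410910469153565733117183635200 / 2446685893599555554651329659, 5946583310401597288483061837287528000 / 7340057680798666663953988977, 68517972790453114067478846493701250 / 271853988177728394961258851, 1426616384843913856899748051744259375 / 39146974297592888874421274544, 10080948213329870478420959057854671875 / 11274328597706751995833327068672]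
    (by intro k; fin_cases k <;> norm_num) h1 h2
  simp only [Fin.sum_univ_succ, Fin.sum_univ_zero, Matrix.cons_val_zero, Matrix.cons_val_succ,
      Fin.val_zero, Fin.val_succ, zero_add, Nat.reduceAdd, Nat.reduceSub] at this
  unfold aux leg1 leg2 leg3 leg4 leg5 leg9; linear_combination this

/-- Together with `aux_le_quad_low`, a pair of quadratic majorants whose sum is controlled by the
constraint of `cap_two_ineq`. -/
lemma aux_le_quad_high {t : ℝ} (h1 : 433 / 500 ≤ t) (h2 : t ≤ 97 / 100) : aux (-t) ≤ -19879 / 2000 * t ^ 2 + 300381 / 10000 * t - 174137 / 10000 := by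
  rcases le_total t (23 / 25) with h3 | h3
  · have := bernstein_form_nonneg (433 / 500) (23 / 25) t ![69732406221559238634072797 / 488038239039168000, 43489523417302952671016107 / 2711323550217600, 429473133186595244528449 / 4236443047215, 707354244484372167362507 / 2541865828329, 358068985118674919066170 / 847288609443, 323950812243498836205400 / 847288609443, 526206380368497162896000 / 2541865828329, 54032509384428311360000 / 847288609443, 8397308532172620800000 / 847288609443, 4730080114148096000000 / 7625597484987]
      (by intro k; fin_cases k <;> norm_num) h1 h3
    simp only [Fin.sum_univ_succ, Fin.sum_univ_zero, Matrix.cons_val_zero, Matrix.cons_val_succ,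
      Fin.val_zero, Fin.val_succ, zero_add, Nat.reduceAdd, Nat.reduceSub] at this
    unfold aux leg1 leg2 leg3 leg4 leg5 leg9; linear_combination this
  clear h1; rename' h3 => h1
  rcases le_total t (189 / 200) with h3 | h3
  · have := bernstein_form_nonneg (23 / 25) (189 / 200) t ![154995265180404809728 / 244140625, 894258466616028168192 / 244140625, 1939234869251373334528 / 244140625, 1901733447184446185472 / 244140625, 1265244542125653760768 / 244140625, 2606009933055189082528 / 244140625, 4991944768001525249992 / 244140625, 4730743566541584921328 / 244140625, 139413555093095745348483 / 15625000000, 203269544704209204996441 / 125000000000]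
      (by intro k; fin_cases k <;> norm_num) h1 h3
    simp only [Fin.sum_univ_succ, Fin.sum_univ_zero, Matrix.cons_val_zero, Matrix.cons_val_succ,
      Fin.val_zero, Fin.val_succ, zero_add, Nat.reduceAdd, Nat.reduceSub] at this
    unfold aux leg1 leg2 leg3 leg4 leg5 leg9; linear_combination this
  clear h1; rename' h3 => h1
  have := bernstein_form_nonneg (189 / 200) (97 / 100) t ![203269544704209204996441 / 125000000000, 1271771681965499863574037 / 62500000000, 865501255722447599662601 / 7812500000, 1344896338799003053545337 / 3906250000, 2633025262842936747332503 / 3906250000, 1687174542051603566282819 / 1953125000, 354552171205892156101029 / 488281250, 94425383574035722466893 / 244140625, 57933763371929577956289 / 488281250, 3904890649328795673933 / 244140625]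
    (by intro k; fin_cases k <;> norm_num) h1 h2
  simp only [Fin.sum_univ_succ, Fin.sum_univ_zero, Matrix.cons_val_zero, Matrix.cons_val_succ,
      Fin.val_zero, Fin.val_succ, zero_add, Nat.reduceAdd, Nat.reduceSub] at this
  unfold aux leg1 leg2 leg3 leg4 leg5 leg9; linear_combination this

lemma aux_le_quad_low {t : ℝ} (h1 : 442 / 625 ≤ t) (h2 : t ≤ 1733 / 2000) : aux (-t) ≤ 24057 / 2500 * t ^ 2 - 4949 / 625 * t + 492 / 625 := by
  have := bernstein_form_nonneg (442 / 625) (1733 / 2000) t ![59278777042562969226950375095926784 / 8257564890898499996948237599125, 1361164476621279014626862607343026176 / 183501442019966666598849724425, 1979291758247450926625550951100973056 / 36700288403993333319769944885, 3677335887820292085577709994413785088 / 22020173042395999991861966931, 2086970073705738312092832483142574080 / 7340057680798666663953988977, 2103155329319407460697199351550905600 / 7340057680798666663953988977, 3747994104552791865449185511862584000 / 22020173042395999991861966931, 402672401810234079821928855329933750 / 7340057680798666663953988977, 862308319651741570699244155232778125 / 117440922892778666623263823632, 249243257589611435262877173564015625 / 33822985793120255987499981206016]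
    (by intro k; fin_cases k <;> norm_num) h1 h2
  simp only [Fin.sum_univ_succ, Fin.sum_univ_zero, Matrix.cons_val_zero, Matrix.cons_val_succ,
      Fin.val_zero, Fin.val_succ, zero_add, Nat.reduceAdd, Nat.reduceSub] at this
  unfold aux leg1 leg2 leg3 leg4 leg5 leg9; linear_combination this

/-- An even quadratic majorant, matched to the constraint of `cap_three_sq_ineq`. -/
lemma aux_le_even {t : ℝ} (h1 : 442 / 625 ≤ t) (h2 : t ≤ 22 / 25) : aux (-t) ≤ 47579 / 10000 * t ^ 2 - 23677 / 10000 := by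
  have := bernstein_form_nonneg (442 / 625) (22 / 25) t ![5762708280394088362257742789 / 63968148067341828096000, 1692051421205867321396432899 / 284302880299297013760, 574244198824994926966997045 / 14215144014964850688, 5185527725514986521868529125 / 42645432044894552064, 5784250281144245029435634375 / 28430288029929701376, 5754185900714171861044765625 / 28430288029929701376, 5072704465840514933873046875 / 42645432044894552064, 540398646016632712841796875 / 14215144014964850688, 289998426261009361572265625 / 56860576059859402752, 16133607286626556396484375 / 511745184538734624768]
    (by intro k; fin_cases k <;> norm_num) h1 h2
  simp only [Fin.sum_univ_succ, Fin.sum_univ_zero, Matrix.cons_val_zero, Matrix.cons_val_succ,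
      Fin.val_zero, Fin.val_succ, zero_add, Nat.reduceAdd, Nat.reduceSub] at this
  unfold aux leg1 leg2 leg3 leg4 leg5 leg9; linear_combination this

/-- Together with `aux_le_lin_low`, linear majorants with slopes in ratio `2 : 1`, matched to the
constraint of `cap_three_lin_ineq`. -/
lemma aux_le_lin_high {t : ℝ} (h1 : 22 / 25 ≤ t) (h2 : t ≤ 97 / 100) : aux (-t) ≤ 18689 / 1250 * t - 118107 / 10000 := by
  have := bernstein_form_nonneg (22 / 25) (97 / 100) t ![4233634028613815296 / 48427561125, 7669119421599108224 / 5380840125, 14342945174186494208 / 1793613375, 383604279390884509792 / 16142520375, 234558826415736085624 / 5380840125, 3498079748090582801 / 66430125, 687333285786034208053 / 16142520375, 965110160581797360583 / 43046721000, 803285541088793618293 / 114791256000, 24434973849328795673933 / 24794911296000]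
    (by intro k; fin_cases k <;> norm_num) h1 h2
  simp only [Fin.sum_univ_succ, Fin.sum_univ_zero, Matrix.cons_val_zero, Matrix.cons_val_succ,
      Fin.val_zero, Fin.val_succ, zero_add, Nat.reduceAdd, Nat.reduceSub] at this
  unfold aux leg1 leg2 leg3 leg4 leg5 leg9; linear_combination this

lemma aux_le_lin_low {t : ℝ} (h1 : 442 / 625 ≤ t) (h2 : t ≤ 87 / 100) : aux (-t) ≤ 18689 / 2500 * t - 26423 / 5000 := by
  have := bernstein_form_nonneg (442 / 625) (87 / 100) t ![34053393497215783323025097728 / 1035280352257245355801375, 417843680448550370656925943168 / 41411214090289814232055, 595798180615229191636324266240 / 8282242818057962846411, 1828635873815291880978577676000 / 8282242818057962846411, 3108567297543421025029147525000 / 8282242818057962846411, 3155469440655331316831292734375 / 8282242818057962846411, 1914323695105672407788978515625 / 8282242818057962846411, 140133726750162654091455078125 / 1790755203904424399224, 6377294469927336432144775390625 / 530063540355709622170304, 1441074029764771657684326171875 / 4240508322845676977362432]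
    (by intro k; fin_cases k <;> norm_num) h1 h2
  simp only [Fin.sum_univ_succ, Fin.sum_univ_zero, Matrix.cons_val_zero, Matrix.cons_val_succ,
      Fin.val_zero, Fin.val_succ, zero_add, Nat.reduceAdd, Nat.reduceSub] at this
  unfold aux leg1 leg2 leg3 leg4 leg5 leg9; linear_combination this

/-! ### At most twelve contacts -/

lemma inner_sq_le (e s : E3) (he : ‖e‖ = 1) : inner ℝ e s ^ 2 ≤ inner ℝ s s := by
  have h := real_inner_mul_inner_self_le e s
  rw [inner_self_one he, one_mul] at h
  rwa [sq]

/-- Two points at heights `c` and `d` around `-e`; Cauchy-Schwarz against the projection of `e` to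
their span in the extremal case of angle `60°`. -/
lemma cap_two_ineq {e y z : E3} (he : ‖e‖ = 1) (hy : ‖y‖ = 1) (hz : ‖z‖ = 1)
    (h : inner ℝ y z ≤ (1 / 2 : ℝ)) (c d : ℝ) (hc : inner ℝ e y = -c) (hd : inner ℝ e z = -d)
    (hcd : d ≤ 2 * c) (hdc : c ≤ 2 * d) : c ^ 2 + d ^ 2 - c * d ≤ 3 / 4 := by
  have h1 := inner_sq_le e ((c - d / 2) • y + (d - c / 2) • z) he
  simp only [inner_add_left, inner_add_right, inner_smul_left, inner_smul_right, hc, hd,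
    inner_self_one hy, inner_self_one hz, real_inner_comm z y, conj_trivial] at h1
  have h2 : (c - d / 2) * (d - c / 2) * inner ℝ z y ≤ (c - d / 2) * (d - c / 2) * (1 / 2) := by
    rw [real_inner_comm]
    exact mul_le_mul_of_nonneg_left h (mul_nonneg (by linarith) (by linarith))
  have h3 : (c ^ 2 + d ^ 2 - c * d) ^ 2 ≤ 3 / 4 * (c ^ 2 + d ^ 2 - c * d) := by nlinarith
  nlinarith [sq_nonneg (c ^ 2 + d ^ 2 - c * d)]

/-- Three points around `-e`: Cauchy-Schwarz against the combination weighted by the heights. -/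
lemma cap_three_sq_ineq {e y z w : E3} (he : ‖e‖ = 1) (hy : ‖y‖ = 1) (hz : ‖z‖ = 1)
    (hw : ‖w‖ = 1) (hyz : inner ℝ y z ≤ (1 / 2 : ℝ)) (hyw : inner ℝ y w ≤ (1 / 2 : ℝ))
    (hzw : inner ℝ z w ≤ (1 / 2 : ℝ)) (a b c : ℝ) (ha : inner ℝ e y = -a)
    (hb : inner ℝ e z = -b) (hc : inner ℝ e w = -c) (a0 : 0 < a) (b0 : 0 < b) (c0 : 0 < c) :
    a ^ 2 + b ^ 2 + c ^ 2 ≤ 2 := by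
  have h1 := inner_sq_le e (a • y + b • z + c • w) he
  simp only [inner_add_left, inner_add_right, inner_smul_left, inner_smul_right, ha, hb, hc,
    inner_self_one hy, inner_self_one hz, inner_self_one hw, real_inner_comm y z,
    real_inner_comm y w, real_inner_comm z w, conj_trivial] at h1
  have k1 := mul_le_mul_of_nonneg_left hyz (mul_pos a0 b0).le
  have k2 := mul_le_mul_of_nonneg_left hyw (mul_pos a0 c0).le
  have k3 := mul_le_mul_of_nonneg_left hzw (mul_pos b0 c0).le
  have h3 : (a ^ 2 + b ^ 2 + c ^ 2) ^ 2 ≤ 2 * (a ^ 2 + b ^ 2 + c ^ 2) := by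
    nlinarith [sq_nonneg (a - b), sq_nonneg (a - c), sq_nonneg (b - c)]
  have : 0 < a ^ 2 + b ^ 2 + c ^ 2 := by positivity
  nlinarith

/-- Three points around `-e`: Cauchy-Schwarz against `2 y + z + w`, whose norm is at most `√11`. -/
lemma cap_three_lin_ineq {e y z w : E3} (he : ‖e‖ = 1) (hy : ‖y‖ = 1) (hz : ‖z‖ = 1)
    (hw : ‖w‖ = 1) (hyz : inner ℝ y z ≤ (1 / 2 : ℝ)) (hyw : inner ℝ y w ≤ (1 / 2 : ℝ))
    (hzw : inner ℝ z w ≤ (1 / 2 : ℝ)) (a b c : ℝ) (ha : inner ℝ e y = -a)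
    (hb : inner ℝ e z = -b) (hc : inner ℝ e w = -c) (a0 : 0 < a) (b0 : 0 < b) (c0 : 0 < c) :
    2 * a + b + c ≤ 33167 / 10000 := by
  have h1 := inner_sq_le e ((2 : ℝ) • y + z + w) he
  simp only [inner_add_left, inner_add_right, inner_smul_left, inner_smul_right, ha, hb, hc,
    inner_self_one hy, inner_self_one hz, inner_self_one hw, real_inner_comm y z,
    real_inner_comm y w, real_inner_comm z w, conj_trivial] at h1
  nlinarith

lemma cap_two_num {c d : ℝ} (hc : 442 / 625 ≤ c) (hd : 442 / 625 ≤ d)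
    (h : c ^ 2 + d ^ 2 - c * d ≤ 3 / 4) : aux (-c) + aux (-d) ≤ 2419 / 1000 := by
  wlog hcd : d ≤ c generalizing c d
  · have := this hd hc (by linarith) (by linarith)
    linarith
  rcases le_or_gt c (1733 / 2000) with h1 | h1
  · linarith [aux_le_two hc h1, aux_le_two hd (hcd.trans h1)]
  · have h2 : c ≤ 97 / 100 := by nlinarith
    have h3 : d ≤ 1733 / 2000 := by nlinarith
    have e1 := aux_le_quad_high (by linarith) h2
    have e2 := aux_le_quad_low hd h3
    -- completing the square at the minimum of the quadratic form
    nlinarith [sq_nonneg (c - 11085 / 42049 * d - 71436 / 100000), sq_nonneg (d - 127 / 1000)]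

lemma cap_three_num_aux {a b c : ℝ} (hb : 442 / 625 ≤ b)
    (hc : 442 / 625 ≤ c) (h : 2 * a + b + c ≤ 33167 / 10000) (h1 : 22 / 25 ≤ a) :
    aux (-a) + aux (-b) + aux (-c) ≤ 2419 / 1000 := by
  have e1 := aux_le_lin_high h1 (by linarith)
  have e2 := aux_le_lin_low hb (by linarith)
  have e3 := aux_le_lin_low hc (by linarith)
  linarith

lemma cap_three_num {a b c : ℝ} (ha : 442 / 625 ≤ a) (hb : 442 / 625 ≤ b) (hc : 442 / 625 ≤ c)
    (hs : a ^ 2 + b ^ 2 + c ^ 2 ≤ 2) (h1 : 2 * a + b + c ≤ 33167 / 10000)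
    (h2 : 2 * b + a + c ≤ 33167 / 10000) (h3 : 2 * c + a + b ≤ 33167 / 10000) :
    aux (-a) + aux (-b) + aux (-c) ≤ 2419 / 1000 := by
  rcases le_or_gt (22 / 25) a with a1 | a1
  · exact cap_three_num_aux hb hc h1 a1
  rcases le_or_gt (22 / 25) b with b1 | b1
  · linarith [cap_three_num_aux ha hc h2 b1]
  rcases le_or_gt (22 / 25) c with c1 | c1
  · linarith [cap_three_num_aux ha hb h3 c1]
  linarith [aux_le_even ha a1.le, aux_le_even hb b1.le, aux_le_even hc c1.le]

/-- Since `(442/625)² > 1/2`, points of the cap opposite to `x` are seen from `x` at obtuse angles. -/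
lemma cap_card_le_three {V : Finset E3} (hV : Kissing V) {x : E3} (hx : ‖x‖ = 1) (T : Finset E3)
    (hT : T ⊆ V) (hcap : ∀ y ∈ T, inner ℝ x y < (-(442 / 625) : ℝ)) : T.card ≤ 3 := by
  by_contra hcon
  have hneg : ∀ y ∈ T, ∀ z ∈ T, y ≠ z → pr x y z < 0 := by
    intro y hy z hz hyz
    have := hV.2 y (hT hy) z (hT hz) hyz
    have h1 := hcap y hy
    have h2 := hcap z hz
    unfold pr
    nlinarith
  refine hcon (card_le_three_of_obtuse x hx T (fun y hy => ?_) hneg)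
  obtain ⟨z, hz, hzy⟩ := Finset.exists_mem_ne (by omega : 1 < T.card) y
  exact pr_self_pos_of_ne x hx y z (hneg y hy z hz hzy.symm).ne

/-- The points of a kissing family in the cap opposite to `x` contribute at most `2.419` to the row
sum of `aux` at `x`. -/
lemma cap_sum_le {V : Finset E3} (hV : Kissing V) {x : E3} (hx : ‖x‖ = 1) (T : Finset E3)
    (hT : T ⊆ V) (hcap : ∀ y ∈ T, inner ℝ x y < (-(442 / 625) : ℝ)) :
    ∑ y ∈ T, aux (inner ℝ x y) ≤ 2419 / 1000 := by
  have hcard := cap_card_le_three hV hx T hT hcap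
  have hneg : ∀ y, inner ℝ x y = -(-inner ℝ x y : ℝ) := fun y => by ring
  have hle : ∀ y ∈ T, -inner ℝ x y ≤ (1 : ℝ) := by
    intro y hy
    have := inner_sq_le x y hx
    rw [inner_self_one (hV.1 y (hT hy))] at this
    nlinarith
  have hge : ∀ y ∈ T, (442 / 625 : ℝ) ≤ -inner ℝ x y := fun y hy => by linarith [hcap y hy]
  have hn : ∀ y ∈ T, ‖y‖ = 1 := fun y hy => hV.1 y (hT hy)
  have hi : ∀ y ∈ T, ∀ z ∈ T, y ≠ z → inner ℝ y z ≤ (1 / 2 : ℝ) := fun y hy z hz =>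
    hV.2 y (hT hy) z (hT hz)
  interval_cases h : T.card
  · rw [Finset.card_eq_zero] at h; simp [h]; norm_num
  · obtain ⟨y, rfl⟩ := Finset.card_eq_one.1 h
    rw [Finset.sum_singleton, hneg y]
    exact aux_le_one (hge y (by simp)) (hle y (by simp))
  · obtain ⟨y, z, hyz, rfl⟩ := Finset.card_eq_two.1 h
    have gy := hge y (by simp)
    have gz := hge z (by simp)
    have ly := hle y (by simp)
    have lz := hle z (by simp)
    rw [Finset.sum_pair hyz, hneg y, hneg z]
    exact cap_two_num gy gz (cap_two_ineq hx (hn y (by simp)) (hn z (by simp))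
      (hi y (by simp) z (by simp) hyz) _ _ (hneg y) (hneg z) (by linarith) (by linarith))
  · obtain ⟨y, z, w, hyz, hyw, hzw, rfl⟩ := Finset.card_eq_three.1 h
    have gy := hge y (by simp)
    have gz := hge z (by simp)
    have gw := hge w (by simp)
    have ny := hn y (by simp)
    have nz := hn z (by simp)
    have nw := hn w (by simp)
    have iyz := hi y (by simp) z (by simp) hyz
    have iyw := hi y (by simp) w (by simp) hyw
    have izw := hi z (by simp) w (by simp) hzw
    have hsum : ∑ u ∈ ({y, z, w} : Finset E3), aux (inner ℝ x u) =
        aux (inner ℝ x y) + aux (inner ℝ x z) + aux (inner ℝ x w) := by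
      rw [Finset.sum_insert (by simp [hyz, hyw]), Finset.sum_pair hzw, add_assoc]
    rw [hsum, hneg y, hneg z, hneg w]
    refine cap_three_num gy gz gw
      (cap_three_sq_ineq hx ny nz nw iyz iyw izw _ _ _ (hneg y) (hneg z) (hneg w)
        (by linarith) (by linarith) (by linarith))
      (cap_three_lin_ineq hx ny nz nw iyz iyw izw _ _ _ (hneg y) (hneg z) (hneg w)
        (by linarith) (by linarith) (by linarith))
      (cap_three_lin_ineq hx nz ny nw (by rwa [real_inner_comm]) izw iyw _ _ _
        (hneg z) (hneg y) (hneg w) (by linarith) (by linarith) (by linarith))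
      (cap_three_lin_ineq hx nw ny nz (by rwa [real_inner_comm]) (by rwa [real_inner_comm]) iyz
        _ _ _ (hneg w) (hneg y) (hneg z) (by linarith) (by linarith) (by linarith))

/-- Outside the opposite cap only `x` itself contributes positively, namely `aux 1 = 10.576`. -/
lemma row_sum_lt {V : Finset E3} (hV : Kissing V) {x : E3} (hx : x ∈ V) :
    ∑ z ∈ V, aux (inner ℝ x z) < 13 := by
  have h1 := cap_sum_le hV (hV.1 x hx)
    ((V.erase x).filter fun z => inner ℝ x z < (-(442 / 625) : ℝ))
    (fun z hz => Finset.mem_of_mem_erase (Finset.mem_filter.1 hz).1)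
    (fun z hz => (Finset.mem_filter.1 hz).2)
  have h2 : ∑ z ∈ (V.erase x).filter (fun z => ¬ inner ℝ x z < (-(442 / 625) : ℝ)),
      aux (inner ℝ x z) ≤ 0 := by
    refine Finset.sum_nonpos fun z hz => ?_
    obtain ⟨hz1, hz2⟩ := Finset.mem_filter.1 hz
    exact aux_nonpos (by linarith) (hV.2 x hx z (Finset.mem_of_mem_erase hz1)
      (Finset.ne_of_mem_erase hz1).symm)
  have h3 : aux 1 = 12995 / 1000 - 2419 / 1000 := by
    unfold aux leg1 leg2 leg3 leg4 leg5 leg9; norm_num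
  rw [← Finset.add_sum_erase V _ hx, inner_self_one (hV.1 x hx), h3,
    ← Finset.sum_filter_add_sum_filter_not (V.erase x)
      (fun z => inner ℝ x z < (-(442 / 625) : ℝ))]
  linarith

/-- The kissing number of `ℝ³` is at most twelve. -/
theorem Kissing.card_le {V : Finset E3} (hV : Kissing V) : V.card ≤ 12 := by
  by_contra hcon
  have h13 : (13 : ℝ) ≤ V.card := by exact_mod_cast (by omega : 13 ≤ V.card)
  have hne : V.Nonempty := Finset.card_pos.1 (by omega)
  have h1 := aux_sum_ge V hV.1
  have h2 : ∑ y ∈ V, ∑ z ∈ V, aux (inner ℝ y z) < ∑ y ∈ V, (13 : ℝ) :=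
    Finset.sum_lt_sum_of_nonempty hne fun y hy => row_sum_lt hV hy
  rw [Finset.sum_const, nsmul_eq_mul] at h2
  nlinarith

/-! ### Contacts and common neighbours -/

/-- Two unit vectors are in contact when their angle is exactly `60°`. -/
def Ct (x y : E3) : Prop := inner ℝ x y = (1 / 2 : ℝ)

lemma Ct.symm {x y : E3} (h : Ct x y) : Ct y x := by
  unfold Ct at *; rwa [real_inner_comm]

lemma Ct.ne {x y : E3} (hx : ‖x‖ = 1) (h : Ct x y) : x ≠ y := by
  rintro rfl
  unfold Ct at h; rw [inner_self_one hx] at h; norm_num at h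

lemma eq_of_inner_one {x y : E3} (hx : ‖x‖ = 1) (hy : ‖y‖ = 1) (h : inner ℝ x y = (1 : ℝ)) :
    x = y := (inner_eq_one_iff_of_norm_eq_one hx hy).1 h

lemma inner_lt_one {x y : E3} (hx : ‖x‖ = 1) (hy : ‖y‖ = 1) (h : x ≠ y) :
    inner ℝ x y < (1 : ℝ) := (inner_lt_one_iff_real_of_norm_eq_one hx hy).2 h

/-- If `u` touches both `x` and `y` then the angle between them is at most `120°`. -/
lemma inner_ge_of_common {x y u : E3} (hx : ‖x‖ = 1) (hy : ‖y‖ = 1) (hu : ‖u‖ = 1)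
    (h1 : Ct x u) (h2 : Ct y u) : (-(1 / 2) : ℝ) ≤ inner ℝ x y := by
  have h := inner_sq_le u (x + y) hu
  unfold Ct at h1 h2
  rw [real_inner_comm] at h1 h2
  simp only [inner_add_left, inner_add_right, h1, h2, inner_self_one hx, inner_self_one hy,
    real_inner_comm x y] at h
  linarith

/-- In a three-dimensional space the orthogonal complement of two independent vectors is a
line. -/
lemma collinear_of_orth {a b u u' : E3} (ha : ‖a‖ = 1) (hb : 0 < pr a b b)
    (h1 : inner ℝ a u = (0 : ℝ)) (h2 : inner ℝ b u = (0 : ℝ)) (h3 : inner ℝ a u' = (0 : ℝ))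
    (h4 : inner ℝ b u' = (0 : ℝ)) :
    inner ℝ u u' ^ 2 = inner ℝ u u * inner ℝ u' u' := by
  obtain ⟨w, h⟩ := exists_planar_coord a ha
  have e1 : inner ℝ u u' = pr a u u' := by unfold pr; rw [h1]; ring
  have e2 : inner ℝ u u = pr a u u := by unfold pr; rw [h1]; ring
  have e3 : inner ℝ u' u' = pr a u' u' := by unfold pr; rw [h3]; ring
  have e4 : pr a b u = 0 := by unfold pr; rw [h1, h2]; ring
  have e5 : pr a b u' = 0 := by unfold pr; rw [h3, h4]; ring
  rw [e1, e2, e3]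
  rw [h] at hb e4 e5
  simp only [h, Complex.mul_re, Complex.conj_re, Complex.conj_im] at *
  have k : ((w u).re * (w u').im - (w u).im * (w u').re) *
      ((w b).re * (w b).re - (w b).im * -(w b).im) = 0 := by
    linear_combination ((w b).re * (w u').im - (w b).im * (w u').re) * e4 +
      (-(w b).re * (w u).im + (w b).im * (w u).re) * e5
  have k2 := (mul_eq_zero.1 k).resolve_right hb.ne'
  linear_combination (-((w u).re * (w u').im - (w u).im * (w u').re)) * k2

/-- Two distinct unit vectors touching both `a` and `b` are mirror images in the plane of
`a` and `b`. -/
lemma add_eq_of_common {a b x y : E3} (ha : ‖a‖ = 1) (hb : ‖b‖ = 1) (hx : ‖x‖ = 1)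
    (hy : ‖y‖ = 1) (hab : a ≠ b) (hxy : x ≠ y) (h1 : Ct x a) (h2 : Ct x b) (h3 : Ct y a)
    (h4 : Ct y b) : x + y = (1 + inner ℝ a b : ℝ)⁻¹ • (a + b) := by
  have g1 := inner_ge_of_common ha hb hx h1.symm h2.symm
  have g2 := inner_lt_one ha hb hab
  set g : ℝ := inner ℝ a b with hg
  have hpos : 0 < 1 + g := by linarith
  have hpb : 0 < pr a b b := by rw [pr_self hb, ← hg]; nlinarith
  have k1 : inner ℝ a x = (1 / 2 : ℝ) := h1.symm
  have k2 : inner ℝ b x = (1 / 2 : ℝ) := h2.symm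
  have k3 : inner ℝ a y = (1 / 2 : ℝ) := h3.symm
  have k4 : inner ℝ b y = (1 / 2 : ℝ) := h4.symm
  -- `p` is the common orthogonal projection of `x` and `y` to the plane of `a` and `b`
  set p : E3 := (1 + g)⁻¹ • ((1 / 2 : ℝ) • (a + b)) with hp
  have hgc : inner ℝ b a = g := by rw [real_inner_comm]
  have pa : inner ℝ a p = (1 / 2 : ℝ) := by
    simp only [hp, inner_smul_right, inner_add_right, inner_self_one ha, ← hg]; field_simp
  have pb : inner ℝ b p = (1 / 2 : ℝ) := by
    simp only [hp, inner_smul_right, inner_add_right, inner_self_one hb, hgc]; field_simp; ring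
  have hpz : ∀ z, inner ℝ p z = (1 + g)⁻¹ * (1 / 2 * (inner ℝ a z + inner ℝ b z)) := by
    intro z
    rw [hp, real_inner_smul_left, real_inner_smul_left, inner_add_left]
  have px : inner ℝ p x = inner ℝ p p := by rw [hpz, hpz, k1, k2, pa, pb]
  have py : inner ℝ p y = inner ℝ p p := by rw [hpz, hpz, k3, k4, pa, pb]
  have key := collinear_of_orth (u := x - p) (u' := y - p) ha hpb
    (by rw [inner_sub_right, k1, pa]; ring) (by rw [inner_sub_right, k2, pb]; ring)
    (by rw [inner_sub_right, k3, pa]; ring) (by rw [inner_sub_right, k4, pb]; ring)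
  simp only [inner_sub_left, inner_sub_right, px, py, real_inner_comm p, inner_self_one hx,
    inner_self_one hy] at key
  have hxy' := inner_lt_one hx hy hxy
  have key2 : (1 - inner ℝ x y : ℝ) * (1 + inner ℝ x y - 2 * inner ℝ p p) = 0 := by
    linear_combination -key
  have key3 := (mul_eq_zero.1 key2).resolve_left (by linarith)
  have key4 : inner ℝ (x + y - (2 : ℝ) • p) (x + y - (2 : ℝ) • p) = (0 : ℝ) := by
    simp only [inner_sub_left, inner_sub_right, inner_add_left, inner_add_right,
      inner_smul_left, inner_smul_right, px, py, real_inner_comm p, inner_self_one hx,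
      inner_self_one hy, conj_trivial, real_inner_comm x y]
    linear_combination 2 * key3
  have key5 := sub_eq_zero.1 (inner_self_eq_zero.1 key4)
  rw [key5, hp, smul_smul, smul_smul]
  congr 1; ring

lemma common_contacts_le_two {a b : E3} (ha : ‖a‖ = 1) (hb : ‖b‖ = 1) (hab : a ≠ b)
    (T : Finset E3) (hT : ∀ x ∈ T, ‖x‖ = 1 ∧ Ct x a ∧ Ct x b) : T.card ≤ 2 := by
  by_contra hcon
  obtain ⟨x, y, z, hx, hy, hz, hxy, hxz, hyz⟩ := Finset.two_lt_card_iff.1 (not_le.1 hcon)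
  obtain ⟨x1, x2, x3⟩ := hT x hx
  obtain ⟨y1, y2, y3⟩ := hT y hy
  obtain ⟨z1, z2, z3⟩ := hT z hz
  have e1 := add_eq_of_common ha hb x1 y1 hab hxy x2 x3 y2 y3
  have e2 := add_eq_of_common ha hb x1 z1 hab hxz x2 x3 z2 z3
  exact hyz (add_left_cancel (e1.trans e2.symm))

/-! ### The neighbours of a vector -/

lemma pr_of_contacts {v x y : E3} (hx : Ct v x) (hy : Ct v y) :
    pr v x y = inner ℝ x y - 1 / 4 := by
  unfold pr; unfold Ct at hx hy; rw [hx, hy]; ring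

lemma pr_self_of_contact {v x : E3} (hn : ‖x‖ = 1) (hx : Ct v x) : pr v x x = 3 / 4 := by
  rw [pr_of_contacts hx hx, inner_self_one hn]; norm_num

lemma sqrt_mul_self_three_quarters : √(3 / 4 : ℝ) * √(3 / 4) = 3 / 4 :=
  Real.mul_self_sqrt (by norm_num)

/-- Contacts of `v`, seen from `v`, are at mutual angles with cosine at most `1/3`. -/
lemma contact_sep {V : Finset E3} (hV : Kissing V) {v x y : E3} (hx : x ∈ V) (hy : y ∈ V)
    (hxy : x ≠ y) (h1 : Ct v x) (h2 : Ct v y) :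
    pr v x y ≤ 1 / 3 * (√(pr v x x) * √(pr v y y)) := by
  rw [pr_self_of_contact (hV.1 x hx) h1, pr_self_of_contact (hV.1 y hy) h2,
    sqrt_mul_self_three_quarters, pr_of_contacts h1 h2]
  linarith [hV.2 x hx y hy hxy]

/-- Six angles of at least `arccos (1/3) > 60°` exceed a full turn. -/
lemma contacts_card_le_five {V : Finset E3} (hV : Kissing V) {v : E3} (hv : ‖v‖ = 1)
    (T : Finset E3) (hT : T ⊆ V) (hc : ∀ x ∈ T, Ct v x) : T.card ≤ 5 := by
  refine card_le_five v hv T (fun y hy => ?_) fun y hy z hz hyz => ?_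
  · rw [pr_self_of_contact (hV.1 y (hT hy)) (hc y hy)]; norm_num
  · have := contact_sep hV (hT hy) (hT hz) hyz (hc y hy) (hc z hz)
    rw [pr_self_of_contact (hV.1 y (hT hy)) (hc y hy),
      pr_self_of_contact (hV.1 z (hT hz)) (hc z hz), sqrt_mul_self_three_quarters] at *
    linarith

lemma half_plane_contacts {V : Finset E3} (hV : Kissing V) {v d : E3} (hv : ‖v‖ = 1)
    (T : Finset E3) (hT : T ⊆ V) (hc : ∀ x ∈ T, Ct v x) (hd : ∀ x ∈ T, pr v d x < 0) :
    T.card ≤ 3 := by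
  refine card_le_three_of_half v hv T d hd fun y hy z hz hyz => ?_
  have := contact_sep hV (hT hy) (hT hz) hyz (hc y hy) (hc z hz)
  rw [pr_self_of_contact (hV.1 y (hT hy)) (hc y hy),
    pr_self_of_contact (hV.1 z (hT hz)) (hc z hz), sqrt_mul_self_three_quarters] at *
  linarith

/-- Five contacts leave no room: every direction at `v` is within `arccos (7/9)` of one of
them. -/
lemma covering {V : Finset E3} (hV : Kissing V) {v d : E3} (hv : ‖v‖ = 1)
    (T : Finset E3) (hT : T ⊆ V) (hc : ∀ x ∈ T, Ct v x) (h5 : T.card = 5)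
    (hd : 0 < pr v d d) : ∃ w ∈ T, 7 / 9 * (√(pr v d d) * √(3 / 4)) ≤ pr v d w := by
  by_contra hcon
  push Not at hcon
  have : T.card ≤ 4 := by
    refine card_le_of_pole v hv T d (1 / 3) (7 / 9) 4 (by norm_num) hd (fun y hy => ?_)
      (fun y hy z hz hyz => contact_sep hV (hT hy) (hT hz) hyz (hc y hy) (hc z hz))
      (fun y hy => ?_) (by norm_num) arccos_seven_ninths
    · rw [pr_self_of_contact (hV.1 y (hT hy)) (hc y hy)]; norm_num
    · rw [pr_self_of_contact (hV.1 y (hT hy)) (hc y hy)]; exact hcon y hy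
  omega

/-! ### A vector with five contacts -/

lemma pr_add_left (v x y z : E3) : pr v (x + y) z = pr v x z + pr v y z := by
  unfold pr; rw [inner_add_left, inner_add_right]; ring

lemma pr_add_right (v x y z : E3) : pr v x (y + z) = pr v x y + pr v x z := by
  unfold pr; rw [inner_add_right, inner_add_right]; ring

lemma pr_neg_left (v x y : E3) : pr v (-x) y = -pr v x y := by
  unfold pr; rw [inner_neg_left, inner_neg_right]; ring

/-- Three vectors of a plane have a vanishing Gram determinant. -/
lemma pr_gram (v : E3) (hv : ‖v‖ = 1) (x y z : E3) :
    pr v x x * pr v y y * pr v z z + 2 * (pr v x y * pr v y z * pr v x z) =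
      pr v x x * pr v y z ^ 2 + pr v y y * pr v x z ^ 2 + pr v z z * pr v x y ^ 2 := by
  obtain ⟨w, h⟩ := exists_planar_coord v hv
  simp only [h, Complex.mul_re, Complex.conj_re, Complex.conj_im]
  ring

/-- The covering property in squared form; `49/108 = (7/9)² · 3/4`. -/
lemma covering_sq {V : Finset E3} (hV : Kissing V) {v d : E3} (hv : ‖v‖ = 1)
    (T : Finset E3) (hT : T ⊆ V) (hc : ∀ x ∈ T, Ct v x) (h5 : T.card = 5) :
    ∃ w ∈ T, 0 ≤ pr v d w ∧ 49 / 108 * pr v d d ≤ pr v d w ^ 2 := by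
  rcases (pr_self_nonneg v hv d).eq_or_lt with h0 | h0
  · obtain ⟨w, hw⟩ := Finset.card_pos.1 (by omega : 0 < T.card)
    refine ⟨w, hw, ?_, ?_⟩
    · have := pr_cauchy v hv d w
      rw [← h0, zero_mul] at this
      nlinarith [sq_nonneg (pr v d w)]
    · rw [← h0]; nlinarith [sq_nonneg (pr v d w)]
  · obtain ⟨w, hw, h⟩ := covering hV hv T hT hc h5 h0
    have h1 : 0 ≤ 7 / 9 * (√(pr v d d) * √(3 / 4)) := by positivity
    refine ⟨w, hw, h1.trans h, ?_⟩
    have h2 := pow_le_pow_left₀ h1 h 2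
    have h3 : (7 / 9 * (√(pr v d d) * √(3 / 4))) ^ 2 = 49 / 108 * pr v d d := by
      rw [mul_pow, mul_pow, Real.sq_sqrt h0.le, Real.sq_sqrt (by norm_num)]; ring
    linarith

/-- A member `v` of a kissing family with five contacts `A` (it cannot have more), together with a set `L` of
members that are neither `v` nor contacts of `v`. -/
structure FiveStar (V A L : Finset E3) (v : E3) : Prop where
  kiss : Kissing V
  hv : ‖v‖ = 1
  hvV : v ∈ V
  hA : A ⊆ V
  hL : L ⊆ V
  ct : ∀ a ∈ A, Ct v a
  five : A.card = 5
  ne : ∀ l ∈ L, l ≠ v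
  nct : ∀ l ∈ L, l ∉ A

section
variable {V A L : Finset E3} {v : E3}

lemma FiveStar.nA (h : FiveStar V A L v) {a : E3} (ha : a ∈ A) : ‖a‖ = 1 := h.kiss.1 a (h.hA ha)

lemma FiveStar.nL (h : FiveStar V A L v) {l : E3} (hl : l ∈ L) : ‖l‖ = 1 := h.kiss.1 l (h.hL hl)

lemma FiveStar.ne_AL (h : FiveStar V A L v) {a l : E3} (ha : a ∈ A) (hl : l ∈ L) : a ≠ l := by
  rintro rfl; exact h.nct a hl ha

lemma FiveStar.iA (h : FiveStar V A L v) {a b : E3} (ha : a ∈ A) (hb : b ∈ A) (hab : a ≠ b) :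
    inner ℝ a b ≤ (1 / 2 : ℝ) := h.kiss.2 a (h.hA ha) b (h.hA hb) hab

/-- Members other than `v` and its contacts lie well inside the opposite hemisphere. -/
lemma FiveStar.far (h : FiveStar V A L v) {l : E3} (hl : l ∈ L) :
    inner ℝ v l ≤ (-(11 / 38) : ℝ) := by
  obtain ⟨w, hw, h0, h1⟩ := covering_sq h.kiss (d := l) h.hv A h.hA h.ct h.five
  have h2 := h.kiss.2 w (h.hA hw) l (h.hL hl) (h.ne_AL hw hl)
  have h3 := inner_lt_one h.hv (h.nL hl) (h.ne l hl).symm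
  have h4 : pr v l w = inner ℝ w l - inner ℝ v l / 2 := by
    have := h.ct w hw
    unfold Ct at this
    unfold pr; rw [this, real_inner_comm]; ring
  rw [pr_self (h.nL hl), h4] at h1
  rw [h4] at h0
  set u : ℝ := inner ℝ v l
  have h5 : (inner ℝ w l - u / 2) ^ 2 ≤ ((1 - u) / 2) ^ 2 :=
    pow_le_pow_left₀ h0 (by linarith) 2
  nlinarith

/-- Two close pairs of contacts of `v` sharing a member: the other two members are far apart. -/
lemma FiveStar.close_close (h : FiveStar V A L v) {w a b : E3} (hw : w ∈ A) (ha : a ∈ A) (hb : b ∈ A)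
    (hwa : w ≠ a) (hwb : w ≠ b) (hab : a ≠ b) (h1 : (11 / 27 : ℝ) ≤ inner ℝ w a)
    (h2 : (11 / 27 : ℝ) ≤ inner ℝ w b) : inner ℝ a b ≤ (-(1 / 3) : ℝ) := by
  have g := pr_gram v h.hv w a b
  have i1 := h.iA hw ha hwa
  have i2 := h.iA hw hb hwb
  have i3 := h.iA ha hb hab
  rw [pr_self_of_contact (h.nA hw) (h.ct w hw), pr_self_of_contact (h.nA ha) (h.ct a ha),
    pr_self_of_contact (h.nA hb) (h.ct b hb), pr_of_contacts (h.ct w hw) (h.ct a ha),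
    pr_of_contacts (h.ct w hw) (h.ct b hb), pr_of_contacts (h.ct a ha) (h.ct b hb)] at g
  obtain ⟨p, hp⟩ : ∃ p : ℝ, p = inner ℝ w a - 1 / 4 := ⟨_, rfl⟩
  obtain ⟨q, hq⟩ : ∃ q : ℝ, q = inner ℝ w b - 1 / 4 := ⟨_, rfl⟩
  obtain ⟨r, hr⟩ : ∃ r : ℝ, r = inner ℝ a b - 1 / 4 := ⟨_, rfl⟩
  rw [← hp, ← hq, ← hr] at g
  have e : (3 / 4 * r - p * q) ^ 2 = (9 / 16 - p ^ 2) * (9 / 16 - q ^ 2) := by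
    linear_combination (-3 / 4 : ℝ) * g
  have p1 : 0 ≤ p := by linarith
  have p2 : p ≤ 1 / 4 := by linarith
  have q1 : 0 ≤ q := by linarith
  have q2 : q ≤ 1 / 4 := by linarith
  have e2 : (1 / 2 : ℝ) ^ 2 ≤ (3 / 4 * r - p * q) ^ 2 := by
    rw [e]
    have a1 : (1 / 2 : ℝ) ≤ 9 / 16 - p ^ 2 := by nlinarith
    have a2 : (1 / 2 : ℝ) ≤ 9 / 16 - q ^ 2 := by nlinarith
    nlinarith
  have pq0 : 0 ≤ p * q := mul_nonneg p1 q1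
  have pq1 : p * q ≤ 1 / 16 := by nlinarith
  have e3 : 3 / 4 * r - p * q ≤ -(1 / 2) := by
    by_contra hcon
    push Not at hcon
    nlinarith
  linarith

/-- Two contacts of `v` are either almost in contact or separated by a third one. -/
lemma FiveStar.dichotomy (h : FiveStar V A L v) {a b : E3} (ha : a ∈ A) (hb : b ∈ A) (hab : a ≠ b) :
    (11 / 27 : ℝ) ≤ inner ℝ a b ∨ inner ℝ a b ≤ (-(11 / 49) : ℝ) := by
  -- the direction bisecting `a` and `b`
  obtain ⟨w, hw, h0, h1⟩ := covering_sq h.kiss (d := a + b) h.hv A h.hA h.ct h.five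
  rw [pr_add_left, pr_add_left, pr_add_right, pr_add_right, pr_comm v b a,
    pr_self_of_contact (h.nA ha) (h.ct a ha), pr_self_of_contact (h.nA hb) (h.ct b hb),
    pr_of_contacts (h.ct a ha) (h.ct b hb)] at h1
  rw [pr_add_left] at h0
  by_cases hwa : w = a
  · subst hwa
    rw [pr_comm v b, pr_self_of_contact (h.nA hw) (h.ct w hw),
      pr_of_contacts (h.ct w hw) (h.ct b hb)] at h0 h1
    set t : ℝ := inner ℝ w b
    rcases h0.eq_or_lt with h2 | h2
    · right; linarith
    · left; nlinarith
  by_cases hwb : w = b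
  · subst hwb
    rw [pr_self_of_contact (h.nA hw) (h.ct w hw),
      pr_of_contacts (h.ct a ha) (h.ct w hw)] at h0 h1
    set t : ℝ := inner ℝ a w
    rcases h0.eq_or_lt with h2 | h2
    · right; linarith
    · left; nlinarith
  right
  rw [pr_of_contacts (h.ct a ha) (h.ct w hw), pr_of_contacts (h.ct b hb) (h.ct w hw)] at h0 h1
  have i1 := h.iA ha hw (Ne.symm hwa)
  have i2 := h.iA hb hw (Ne.symm hwb)
  have h5 : (inner ℝ a w - 1 / 4 + (inner ℝ b w - 1 / 4)) ^ 2 ≤ (1 / 2 : ℝ) ^ 2 :=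
    pow_le_pow_left₀ h0 (by linarith) 2
  linarith

/-- No three contacts of `v` are pairwise separated. -/
lemma FiveStar.no_far_triple (h : FiveStar V A L v) {a b c : E3} (ha : a ∈ A) (hb : b ∈ A) (hc : c ∈ A)
    (h1 : inner ℝ a b ≤ (-(11 / 49) : ℝ)) (h2 : inner ℝ a c ≤ (-(11 / 49) : ℝ))
    (h3 : inner ℝ b c ≤ (-(11 / 49) : ℝ)) : False := by
  have := pr_self_nonneg v h.hv (a + b + c)
  simp only [pr_add_left, pr_add_right, pr_comm v b a, pr_comm v c a, pr_comm v c b,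
    pr_self_of_contact (h.nA ha) (h.ct a ha), pr_self_of_contact (h.nA hb) (h.ct b hb),
    pr_self_of_contact (h.nA hc) (h.ct c hc), pr_of_contacts (h.ct a ha) (h.ct b hb),
    pr_of_contacts (h.ct a ha) (h.ct c hc), pr_of_contacts (h.ct b hb) (h.ct c hc)] at this
  linarith

lemma FiveStar.no_close_triangle (h : FiveStar V A L v) {a b c : E3} (ha : a ∈ A) (hb : b ∈ A)
    (hc : c ∈ A) (hab : a ≠ b) (hac : a ≠ c) (hbc : b ≠ c) (h1 : (11 / 27 : ℝ) ≤ inner ℝ a b)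
    (h2 : (11 / 27 : ℝ) ≤ inner ℝ a c) (h3 : (11 / 27 : ℝ) ≤ inner ℝ b c) : False := by
  linarith [h.close_close ha hb hc hab hac hbc h1 h2]

/-- A contact of `v` is close to at most two others. -/
lemma FiveStar.no_close_claw (h : FiveStar V A L v) {w a b c : E3} (hw : w ∈ A) (ha : a ∈ A) (hb : b ∈ A)
    (hc : c ∈ A) (hwa : w ≠ a) (hwb : w ≠ b) (hwc : w ≠ c) (hab : a ≠ b) (hac : a ≠ c)
    (hbc : b ≠ c) (h1 : (11 / 27 : ℝ) ≤ inner ℝ w a)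
    (h2 : (11 / 27 : ℝ) ≤ inner ℝ w b) (h3 : (11 / 27 : ℝ) ≤ inner ℝ w c) : False :=
  h.no_far_triple ha hb hc (by linarith [h.close_close hw ha hb hwa hwb hab h1 h2])
    (by linarith [h.close_close hw ha hc hwa hwc hac h1 h3])
    (by linarith [h.close_close hw hb hc hwb hwc hbc h2 h3])

/-- Four close pairs of contacts of `v` cannot form a quadrilateral: the fifth contact would be
separated from two opposite corners. -/
lemma FiveStar.no_close_square (h : FiveStar V A L v) {a b c d : E3} (ha : a ∈ A) (hb : b ∈ A)
    (hc : c ∈ A) (hd : d ∈ A) (hab : a ≠ b) (hac : a ≠ c) (had : a ≠ d) (hbc : b ≠ c)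
    (hbd : b ≠ d) (hcd : c ≠ d) (h1 : (11 / 27 : ℝ) ≤ inner ℝ a b)
    (h2 : (11 / 27 : ℝ) ≤ inner ℝ b c) (h3 : (11 / 27 : ℝ) ≤ inner ℝ c d)
    (h4 : (11 / 27 : ℝ) ≤ inner ℝ d a) : False := by
  have hcard : ({a, b, c, d} : Finset E3).card < A.card := by
    rw [h.five]; exact lt_of_le_of_lt (Finset.card_le_four) (by norm_num)
  obtain ⟨x, hx, hxn⟩ := Finset.exists_mem_notMem_of_card_lt_card hcard
  simp only [Finset.mem_insert, Finset.mem_singleton, not_or] at hxn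
  obtain ⟨xa, xb, xc, xd⟩ := hxn
  have ac := h.close_close hb ha hc (Ne.symm hab) hbc hac (by rwa [real_inner_comm]) h2
  have xa' : inner ℝ x a ≤ (-(11 / 49) : ℝ) := (h.dichotomy hx ha xa).resolve_left fun hh =>
    h.no_close_claw ha hb hd hx hab had (Ne.symm xa) hbd (Ne.symm xb) (Ne.symm xd) h1
      (by rwa [real_inner_comm]) (by rwa [real_inner_comm])
  have xc' : inner ℝ x c ≤ (-(11 / 49) : ℝ) := (h.dichotomy hx hc xc).resolve_left fun hh =>
    h.no_close_claw hc hb hd hx (Ne.symm hbc) hcd (Ne.symm xc) hbd (Ne.symm xb) (Ne.symm xd)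
      (by rwa [real_inner_comm]) h3 (by rwa [real_inner_comm])
  exact h.no_far_triple hx ha hc xa' xc' (by linarith)

/-- Two disjoint close pairs of contacts of `v` are far apart on average. -/
lemma FiveStar.cross_sum (h : FiveStar V A L v) {a a' b b' : E3} (ha : a ∈ A) (ha' : a' ∈ A)
    (hb : b ∈ A) (hb' : b' ∈ A) (haa : a ≠ a') (hbb : b ≠ b') (hab : a ≠ b) (hab' : a ≠ b')
    (ha'b : a' ≠ b) (ha'b' : a' ≠ b') (h1 : (11 / 27 : ℝ) ≤ inner ℝ a a')
    (h2 : (11 / 27 : ℝ) ≤ inner ℝ b b') :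
    inner ℝ a b + inner ℝ a b' + inner ℝ a' b + inner ℝ a' b' ≤ (-(115 / 294) : ℝ) := by
  have h1' : (11 / 27 : ℝ) ≤ inner ℝ a' a := by rwa [real_inner_comm]
  have h2' : (11 / 27 : ℝ) ≤ inner ℝ b' b := by rwa [real_inner_comm]
  -- one close cross pair forces the three others apart
  have key : ∀ {x x' y y' : E3}, x ∈ A → x' ∈ A → y ∈ A → y' ∈ A → x ≠ x' → y ≠ y' → x ≠ y →
      x ≠ y' → x' ≠ y → x' ≠ y' → (11 / 27 : ℝ) ≤ inner ℝ x x' →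
      (11 / 27 : ℝ) ≤ inner ℝ y y' → (11 / 27 : ℝ) ≤ inner ℝ x y →
      inner ℝ x y + inner ℝ x y' + inner ℝ x' y + inner ℝ x' y' ≤ (-(115 / 294) : ℝ) := by
    intro x x' y y' hx hx' hy hy' xx yy xy xy' x'y x'y' g1 g2 g3
    have k1 := h.close_close hx hx' hy xx xy x'y g1 g3
    have k2 := h.close_close hy hx hy' (Ne.symm xy) yy xy' (by rwa [real_inner_comm]) g2
    have k3 : inner ℝ x' y' ≤ (-(11 / 49) : ℝ) := (h.dichotomy hx' hy' x'y').resolve_left fun hh =>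
      h.no_close_square hx hy hy' hx' xy xy' xx yy (Ne.symm x'y) (Ne.symm x'y') g3 g2
        (by rwa [real_inner_comm]) (by rwa [real_inner_comm])
    linarith [h.iA hx hy xy]
  rcases h.dichotomy ha hb hab with g | g
  · exact key ha ha' hb hb' haa hbb hab hab' ha'b ha'b' h1 h2 g
  rcases h.dichotomy ha hb' hab' with g' | g'
  · linarith [key ha ha' hb' hb haa (Ne.symm hbb) hab' hab ha'b' ha'b h1 h2' g']
  rcases h.dichotomy ha' hb ha'b with k | k
  · linarith [key ha' ha hb hb' (Ne.symm haa) hbb ha'b ha'b' hab hab' h1' h2 k]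
  rcases h.dichotomy ha' hb' ha'b' with k' | k'
  · linarith [key ha' ha hb' hb (Ne.symm haa) (Ne.symm hbb) ha'b' ha'b hab' hab h1' h2' k']
  linarith

/-- The contacts of `v` do not all have two contacts among themselves: five steps of
`arccos (1/3)` do not close up. -/
lemma FiveStar.exists_not_two (h : FiveStar V A L v)
    (h2 : ∀ a ∈ A, (A.filter fun b => Ct a b).card = 2) : False := by
  -- following the ring from a given edge, the next vertex is a reflection
  have step : ∀ a ∈ A, ∀ b ∈ A, Ct a b → ∃ c ∈ A, Ct b c ∧ c ≠ a ∧
      c = (2 / 3 : ℝ) • (v + b) - a := by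
    intro a ha b hb hab
    have hmem : a ∈ A.filter fun c => Ct b c := Finset.mem_filter.2 ⟨ha, hab.symm⟩
    obtain ⟨c, hc, hca⟩ := Finset.exists_mem_ne (by rw [h2 b hb]; norm_num :
      1 < (A.filter fun c => Ct b c).card) a
    obtain ⟨hcA, hbc⟩ := Finset.mem_filter.1 hc
    have hvb : v ≠ b := (h.ct b hb).ne h.hv
    have e := add_eq_of_common h.hv (h.nA hb) (h.nA hcA) (h.nA ha) hvb hca
      (h.ct c hcA).symm hbc.symm (h.ct a ha).symm hab
    have hvb' : inner ℝ v b = (1 / 2 : ℝ) := h.ct b hb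
    refine ⟨c, hcA, hbc, hca, ?_⟩
    rw [hvb'] at e
    rw [eq_sub_iff_add_eq, e]
    norm_num
  obtain ⟨a, ha⟩ := Finset.card_pos.1 (by rw [h.five]; norm_num : 0 < A.card)
  obtain ⟨b, hb⟩ := Finset.card_pos.1 (by rw [h2 a ha]; norm_num :
    0 < (A.filter fun b => Ct a b).card)
  obtain ⟨hbA, hab⟩ := Finset.mem_filter.1 hb
  obtain ⟨c, hcA, hac, -, ec⟩ := step b hbA a ha hab.symm
  obtain ⟨d, hdA, hbd, -, ed⟩ := step a ha b hbA hab
  obtain ⟨e, heA, hce, -, ee⟩ := step a ha c hcA hac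
  obtain ⟨f, hfA, hdf, -, ef⟩ := step b hbA d hdA hbd
  have vv := inner_self_one h.hv
  have aa := inner_self_one (h.nA ha)
  have bb := inner_self_one (h.nA hbA)
  have va : inner ℝ v a = (1 / 2 : ℝ) := h.ct a ha
  have vb : inner ℝ v b = (1 / 2 : ℝ) := h.ct b hbA
  have av : inner ℝ a v = (1 / 2 : ℝ) := (h.ct a ha).symm
  have bv : inner ℝ b v = (1 / 2 : ℝ) := (h.ct b hbA).symm
  have ab : inner ℝ a b = (1 / 2 : ℝ) := hab
  have ba : inner ℝ b a = (1 / 2 : ℝ) := hab.symm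
  have key : inner ℝ f e = (161 / 162 : ℝ) := by
    rw [ef, ed, ee, ec]
    simp only [inner_sub_left, inner_sub_right, inner_add_left, inner_add_right,
      real_inner_smul_left, real_inner_smul_right, vv, aa, bb, va, vb, av, bv, ab, ba]
    norm_num
  rcases eq_or_ne f e with hfe | hfe
  · rw [hfe, inner_self_one (h.nA heA)] at key; norm_num at key
  · linarith [h.iA hfA heA hfe]

end

/-! ### Counting contacts -/

/-- The number of elements of `T` related to `x`. -/
def dg {β : Type*} (r : β → β → Prop) (T : Finset β) (x : β) : ℕ := (T.filter fun y => r x y).card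

section
variable {β : Type*} {r : β → β → Prop}

lemma sum_dg_comm (hs : ∀ x y, r x y → r y x) (S T : Finset β) :
    ∑ x ∈ S, dg r T x = ∑ y ∈ T, dg r S y := by
  have h := Finset.sum_card_bipartiteAbove_eq_sum_card_bipartiteBelow (s := S) (t := T) r
  unfold dg
  unfold Finset.bipartiteAbove Finset.bipartiteBelow at h
  rw [h]
  refine Finset.sum_congr rfl fun y _ => ?_
  congr 1
  exact Finset.filter_congr fun x _ => ⟨hs x y, hs y x⟩

variable [DecidableEq β]

lemma dg_union {S T : Finset β} (h : Disjoint S T) (x : β) :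
    dg r (S ∪ T) x = dg r S x + dg r T x := by
  unfold dg
  rw [Finset.filter_union, Finset.card_union_of_disjoint (Finset.disjoint_filter_filter h)]

lemma sum_dg_union (hs : ∀ x y, r x y → r y x) {S T : Finset β} (h : Disjoint S T) :
    ∑ x ∈ S ∪ T, dg r (S ∪ T) x =
      ∑ x ∈ S, dg r S x + 2 * ∑ x ∈ T, dg r S x + ∑ x ∈ T, dg r T x := by
  rw [Finset.sum_union h]
  simp only [dg_union h, Finset.sum_add_distrib]
  rw [sum_dg_comm hs S T]; ring

/-- The handshake lemma. -/
lemma even_sum_dg (hs : ∀ x y, r x y → r y x) (S : Finset β) (hi : ∀ x ∈ S, ¬ r x x) :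
    Even (∑ x ∈ S, dg r S x) := by
  induction S using Finset.induction_on with
  | empty => simp
  | insert a S ha ih =>
    have hd : Disjoint {a} S := Finset.disjoint_singleton_left.2 ha
    have h0 : dg r {a} a = 0 := by
      unfold dg; simp [hi a (Finset.mem_insert_self _ _)]
    rw [Finset.insert_eq, sum_dg_union hs hd, Finset.sum_singleton, h0, zero_add]
    exact (even_two_mul _).add (ih fun x hx => hi x (Finset.mem_insert_of_mem hx))

/-- Two elements have at most `|T| + (number of common neighbours)` neighbours in `T`. -/
lemma dg_add_le (T : Finset β) (x y : β) :
    dg r T x + dg r T y ≤ T.card + (T.filter fun u => r x u ∧ r y u).card := by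
  unfold dg
  rw [← Finset.card_union_add_card_inter, ← Finset.filter_and]
  gcongr
  exact Finset.union_subset (Finset.filter_subset _ _) (Finset.filter_subset _ _)

lemma dg_le_sub_one {S : Finset β} {x : β} (hx : x ∈ S) (hi : ¬ r x x) :
    dg r S x ≤ S.card - 1 := by
  unfold dg
  rw [← Finset.card_erase_of_mem hx]
  refine Finset.card_le_card fun y hy => ?_
  obtain ⟨h1, h2⟩ := Finset.mem_filter.1 hy
  exact Finset.mem_erase.2 ⟨fun h => hi (h ▸ h2), h1⟩

/-- The contact count among the vertices `L` that are neither equal nor adjacent to a given vertex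
of degree five. The parts `D`, `S`, `Z` consist of the vertices with two, one and no neighbours
among the five, so `4 * |D| + 2 * |S|` counts the edges to these twice; `H1` to `H9` record what
the geometry provides. -/
lemma count_le (hs : ∀ x y, r x y → r y x) (L D S Z : Finset β) (hi : ∀ x ∈ L, ¬ r x x)
    (hDS : Disjoint D S) (hBZ : Disjoint (D ∪ S) Z) (hL : L = (D ∪ S) ∪ Z) (h6 : L.card ≤ 6)
    (H1 : ∀ x ∈ L, dg r L x ≤ 5) (H2 : ∀ x ∈ D ∪ S, dg r L x ≤ 3) (H3 : (D ∪ S).card ≤ 5)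
    (H4 : ∀ x ∈ D ∪ S, dg r (D ∪ S) x ≤ 2) (H5 : ∀ x ∈ D, ∀ y ∈ D, ¬ r x y)
    (H6 : ∀ x ∈ S, dg r D x ≤ 1) (H7 : ∀ x ∈ Z, dg r D x ≤ 2)
    (H8 : ∀ x ∈ L, ∀ y ∈ L, x ≠ y → (L.filter fun u => r x u ∧ r y u).card ≤ 2)
    (H8' : ∀ x ∈ D, ∀ y ∈ D, x ≠ y → (L.filter fun u => r x u ∧ r y u).card ≤ 1)
    (H9 : D.Nonempty → L.card = 6 → ∀ z, Z = {z} → dg r L z ≤ 4) :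
    4 * D.card + 2 * S.card + ∑ x ∈ L, dg r L x ≤ 31 := by
  have cB : (D ∪ S).card = D.card + S.card := Finset.card_union_of_disjoint hDS
  have cL : L.card = D.card + S.card + Z.card := by
    rw [hL, Finset.card_union_of_disjoint hBZ, cB]
  have hDL : D ⊆ L := by rw [hL, Finset.union_assoc]; exact Finset.subset_union_left
  have hZL : Z ⊆ L := by rw [hL]; exact Finset.subset_union_right
  have hBL : D ∪ S ⊆ L := by rw [hL]; exact Finset.subset_union_left
  have eL : ∑ x ∈ L, dg r L x = ∑ x ∈ D, dg r L x + ∑ x ∈ S, dg r L x + ∑ x ∈ Z, dg r L x := by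
    conv_lhs => rw [hL]
    rw [Finset.sum_union hBZ, Finset.sum_union hDS, ← hL]
  have bD : ∑ x ∈ D, dg r L x ≤ D.card * 3 :=
    Finset.sum_le_card_nsmul _ _ _ fun x hx => H2 x (Finset.mem_union_left _ hx)
  have bS : ∑ x ∈ S, dg r L x ≤ S.card * 3 :=
    Finset.sum_le_card_nsmul _ _ _ fun x hx => H2 x (Finset.mem_union_right _ hx)
  have bZ : ∑ x ∈ Z, dg r L x ≤ Z.card * 5 :=
    Finset.sum_le_card_nsmul _ _ _ fun x hx => H1 x (hZL hx)
  -- independence of `D`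
  have zD : ∀ x ∈ D, dg r D x = 0 := fun x hx => by
    unfold dg
    rw [Finset.card_eq_zero, Finset.filter_eq_empty_iff]
    exact fun y hy => H5 x hx y hy
  have few : S.card + Z.card ≤ 3 → 4 * D.card + 2 * S.card + ∑ x ∈ L, dg r L x ≤ 31 := by
    intro ho
    have hSZ : Disjoint S Z := (Finset.disjoint_union_left.1 hBZ).2
    have hd : Disjoint D (S ∪ Z) :=
      Finset.disjoint_union_right.2 ⟨hDS, (Finset.disjoint_union_left.1 hBZ).1⟩
    have e1 : L = D ∪ (S ∪ Z) := by rw [hL, Finset.union_assoc]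
    have e2 := sum_dg_union hs hd
    rw [← e1, Finset.sum_eq_zero zD, Finset.sum_union hSZ] at e2
    have b1 : ∑ x ∈ S, dg r D x ≤ S.card * 1 := Finset.sum_le_card_nsmul _ _ _ H6
    have b2 : ∑ x ∈ Z, dg r D x ≤ Z.card * 2 := Finset.sum_le_card_nsmul _ _ _ H7
    have b3 : ∑ x ∈ S ∪ Z, dg r (S ∪ Z) x ≤ (S ∪ Z).card * ((S ∪ Z).card - 1) :=
      Finset.sum_le_card_nsmul _ _ _ fun x hx => dg_le_sub_one hx
        (hi x (by rw [e1]; exact Finset.mem_union_right _ hx))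
    rw [Finset.card_union_of_disjoint hSZ] at b3
    have b4 : (S.card + Z.card) * (S.card + Z.card - 1) ≤ 6 := by
      generalize S.card + Z.card = o at *
      interval_cases o <;> norm_num
    omega
  by_cases ho : S.card + Z.card ≤ 3
  · exact few ho
  -- two members of `Z` save two contacts
  have z2 : 2 ≤ Z.card → ∑ x ∈ Z, dg r L x + 2 ≤ Z.card * 5 := by
    intro hz
    obtain ⟨x, hx, y, hy, hxy⟩ := Finset.one_lt_card.1 (by omega : 1 < Z.card)
    have k1 := dg_add_le (r := r) L x y
    have k2 := H8 x (hZL hx) y (hZL hy) hxy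
    have hsub : {x, y} ⊆ Z := Finset.insert_subset hx (Finset.singleton_subset_iff.2 hy)
    have e := Finset.sum_sdiff (f := fun x => dg r L x) hsub
    rw [Finset.sum_pair hxy] at e
    have k3 : ∑ x ∈ Z \ {x, y}, dg r L x ≤ (Z \ {x, y}).card * 5 :=
      Finset.sum_le_card_nsmul _ _ _ fun u hu => H1 u (hZL (Finset.mem_sdiff.1 hu).1)
    rw [Finset.card_sdiff_of_subset hsub, Finset.card_pair hxy] at k3
    omega
  rcases Nat.lt_or_ge L.card 6 with hn | hn
  · omega
  have hd2 : D.card ≤ 2 := by omega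
  have hz1 : 1 ≤ Z.card := by omega
  obtain hd | hd | hd : D.card = 0 ∨ D.card = 1 ∨ D.card = 2 := by omega
  · omega
  · rcases Nat.lt_or_ge 1 Z.card with hz | hz
    · have := z2 hz; omega
    · obtain ⟨z, hz'⟩ := Finset.card_eq_one.1 (by omega : Z.card = 1)
      have k := H9 (Finset.card_pos.1 (by omega)) (by omega) z hz'
      have : ∑ x ∈ Z, dg r L x = dg r L z := by rw [hz', Finset.sum_singleton]
      omega
  · obtain ⟨x, y, hxy, hD⟩ := Finset.card_eq_two.1 hd
    have hx : x ∈ D := by rw [hD]; simp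
    have hy : y ∈ D := by rw [hD]; simp
    have dgL : ∀ u ∈ D, dg r L u = dg r (L \ D) u := by
      intro u hu
      have := dg_union (r := r) (Finset.sdiff_disjoint (s := D) (t := L)) u
      rw [Finset.sdiff_union_of_subset hDL, zD u hu] at this
      omega
    have k1 := dg_add_le (r := r) (L \ D) x y
    have k2 := H8' x hx y hy hxy
    have k3 : ((L \ D).filter fun u => r x u ∧ r y u).card ≤ 1 :=
      (Finset.card_le_card (Finset.filter_subset_filter _ Finset.sdiff_subset)).trans k2
    rw [Finset.card_sdiff_of_subset hDL, ← dgL x hx, ← dgL y hy] at k1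
    have eD : ∑ u ∈ D, dg r L u = dg r L x + dg r L y := by
      conv_lhs => rw [hD]
      rw [Finset.sum_pair hxy]
    rcases Nat.lt_or_ge 1 Z.card with hz | hz
    · have := z2 hz; omega
    · obtain ⟨z, hz'⟩ := Finset.card_eq_one.1 (by omega : Z.card = 1)
      have k := H9 (Finset.card_pos.1 (by omega)) (by omega) z hz'
      have e2 := sum_dg_union hs hBZ
      rw [← hL] at e2
      have hzL : z ∈ L := hZL (by rw [hz']; simp)
      have e3 : dg r {z} z = 0 := by unfold dg; simp [hi z hzL]
      have e4 : dg r L z = dg r (D ∪ S) z := by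
        conv_lhs => rw [hL, hz']
        rw [dg_union (hz' ▸ hBZ), e3, add_zero]
      rw [hz', Finset.sum_singleton, Finset.sum_singleton, e3, ← e4, Finset.sum_union hDS] at e2
      have m1 : ∑ u ∈ S, dg r (D ∪ S) u ≤ S.card * 2 :=
        Finset.sum_le_card_nsmul _ _ _ fun u hu => H4 u (Finset.mem_union_right _ hu)
      -- the two members of `D` have no common contact in `S`
      have m2 : ∑ u ∈ D, dg r (D ∪ S) u = dg r S x + dg r S y := by
        conv_lhs => rw [Finset.sum_congr rfl fun u hu => by rw [dg_union hDS, zD u hu, zero_add], hD]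
        rw [Finset.sum_pair hxy]
      have m3 := dg_add_le (r := r) S x y
      have m4 : (S.filter fun u => r x u ∧ r y u).card = 0 := by
        rw [Finset.card_eq_zero, Finset.filter_eq_empty_iff]
        rintro u hu ⟨g1, g2⟩
        have := H6 u hu
        have g3 : ({x, y} : Finset β).card ≤ dg r D u := by
          refine Finset.card_le_card fun t ht => ?_
          rcases Finset.mem_insert.1 ht with rfl | ht
          · exact Finset.mem_filter.2 ⟨hx, hs _ _ g1⟩
          · rw [Finset.mem_singleton.1 ht]
            exact Finset.mem_filter.2 ⟨hy, hs _ _ g2⟩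
        rw [Finset.card_pair hxy] at g3
        omega
      omega

end

/-! ### The members away from a vertex of degree five -/

section
variable {V A L : Finset E3} {v : E3}

lemma FiveStar.dg_A_le (h : FiveStar V A L v) {l : E3} (hl : l ∈ L) : dg Ct A l ≤ 2 := by
  refine common_contacts_le_two h.hv (h.nL hl) (h.ne l hl).symm _ fun x hx => ?_
  obtain ⟨hxA, hlx⟩ := Finset.mem_filter.1 hx
  exact ⟨h.nA hxA, (h.ct x hxA).symm, hlx.symm⟩

lemma FiveStar.ge_neg_half (h : FiveStar V A L v) {l a : E3} (hl : l ∈ L) (ha : a ∈ A)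
    (hla : Ct l a) : (-(1 / 2) : ℝ) ≤ inner ℝ v l :=
  inner_ge_of_common h.hv (h.nL hl) (h.nA ha) (h.ct a ha) hla

/-- A member touching two contacts of `v` is determined by them, and they are close. -/
lemma FiveStar.double (h : FiveStar V A L v) {l w w' : E3} (hl : l ∈ L) (hw : w ∈ A) (hw' : w' ∈ A)
    (hne : w ≠ w') (h1 : Ct l w) (h2 : Ct l w') :
    ∃ c : ℝ, l = c • (w + w') - v ∧ c * (1 + inner ℝ w w') = 1 ∧ c = 1 + inner ℝ v l ∧
      2 / 3 ≤ c ∧ c ≤ 27 / 38 ∧ (11 / 27 : ℝ) ≤ inner ℝ w w' := by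
  have e := add_eq_of_common (h.nA hw) (h.nA hw') (h.nL hl) h.hv hne (h.ne l hl) h1 h2
    (h.ct w hw) (h.ct w' hw')
  have g0 := inner_ge_of_common (h.nA hw) (h.nA hw') h.hv (h.ct w hw).symm (h.ct w' hw').symm
  have g1 := h.iA hw hw' hne
  have g2 := h.far hl
  have hpos : (0 : ℝ) < 1 + inner ℝ w w' := by linarith
  obtain ⟨c, hc⟩ : ∃ c : ℝ, c = (1 + inner ℝ w w' : ℝ)⁻¹ := ⟨_, rfl⟩
  rw [← hc] at e
  have hc1 : c * (1 + inner ℝ w w') = 1 := by rw [hc]; exact inv_mul_cancel₀ hpos.ne'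
  have hc2 : c = 1 + inner ℝ v l := by
    have e1 := congrArg (fun x => (inner ℝ v x : ℝ)) e
    have k1 : inner ℝ v w = (1 / 2 : ℝ) := h.ct w hw
    have k2 : inner ℝ v w' = (1 / 2 : ℝ) := h.ct w' hw'
    simp only [inner_add_right, real_inner_smul_right, inner_self_one h.hv, k1, k2] at e1
    linarith
  have hc0 : c ≤ 27 / 38 := by linarith
  have hcp : 0 < c := by rw [hc]; positivity
  refine ⟨c, eq_sub_iff_add_eq.2 e, hc1, hc2, by nlinarith, hc0, by nlinarith⟩

/-- `l` touches at least two contacts of `v`. -/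
def Dbl (A : Finset E3) (l : E3) : Prop := ∃ w ∈ A, ∃ w' ∈ A, w ≠ w' ∧ Ct l w ∧ Ct l w'

/-- Two members that touch the pairs `{w, a}` and `{w, b}` of contacts of `v` do not touch. -/
lemma FiveStar.inner_shared (h : FiveStar V A L v) {l m w a b : E3} (hl : l ∈ L) (hm : m ∈ L)
    (hlm : l ≠ m) (hw : w ∈ A) (ha : a ∈ A) (hb : b ∈ A) (hwa : w ≠ a) (hwb : w ≠ b)
    (h1 : Ct l w) (h2 : Ct l a) (h3 : Ct m w) (h4 : Ct m b) :
    inner ℝ l m ≤ (11 / 27 : ℝ) := by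
  obtain ⟨c, e, k1, -, k2, -, k3⟩ := h.double hl hw ha hwa h1 h2
  obtain ⟨d, f, m1, -, m2, -, m3⟩ := h.double hm hw hb hwb h3 h4
  have hab : a ≠ b := by
    rintro rfl
    have : c = d := by
      have hpos : (0 : ℝ) < 1 + inner ℝ w a := by linarith
      exact mul_right_cancel₀ hpos.ne' (k1.trans m1.symm)
    exact hlm (by rw [e, f, this])
  have g := h.close_close hw ha hb hwa hwb hab k3 m3
  have v1 : inner ℝ v w = (1 / 2 : ℝ) := h.ct w hw
  have v2 : inner ℝ v b = (1 / 2 : ℝ) := h.ct b hb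
  have v3 : inner ℝ w v = (1 / 2 : ℝ) := (h.ct w hw).symm
  have v4 : inner ℝ a v = (1 / 2 : ℝ) := (h.ct a ha).symm
  have e1 : inner ℝ l m = 1 + c * d * (inner ℝ a b - 1) := by
    rw [e, f]
    simp only [inner_sub_left, inner_sub_right, inner_add_left, inner_add_right,
      real_inner_smul_left, real_inner_smul_right, inner_self_one h.hv, inner_self_one (h.nA hw),
      v1, v2, v3, v4, real_inner_comm w a]
    linear_combination d * k1 + c * m1
  rw [e1]
  nlinarith [mul_le_mul k2 m2 (by norm_num) (by linarith)]

/-- Two members that touch disjoint pairs of contacts of `v` have no common contact. -/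
lemma FiveStar.inner_not_shared (h : FiveStar V A L v) {l m a a' b b' : E3} (hl : l ∈ L)
    (hm : m ∈ L) (ha : a ∈ A) (ha' : a' ∈ A) (hb : b ∈ A) (hb' : b' ∈ A)
    (haa : a ≠ a') (hbb : b ≠ b') (hab : a ≠ b) (hab' : a ≠ b')
    (ha'b : a' ≠ b) (ha'b' : a' ≠ b') (h1 : Ct l a) (h2 : Ct l a') (h3 : Ct m b)
    (h4 : Ct m b') : inner ℝ l m < (-(1 / 2) : ℝ) := by
  obtain ⟨c, e, -, -, k2, -, k3⟩ := h.double hl ha ha' haa h1 h2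
  obtain ⟨d, f, -, -, m2, -, m3⟩ := h.double hm hb hb' hbb h3 h4
  have g := h.cross_sum ha ha' hb hb' haa hbb hab hab' ha'b ha'b' k3 m3
  have v1 : inner ℝ v b = (1 / 2 : ℝ) := h.ct b hb
  have v2 : inner ℝ v b' = (1 / 2 : ℝ) := h.ct b' hb'
  have v3 : inner ℝ a v = (1 / 2 : ℝ) := (h.ct a ha).symm
  have v4 : inner ℝ a' v = (1 / 2 : ℝ) := (h.ct a' ha').symm
  have e1 : inner ℝ l m = 1 - c - d +
      c * d * (inner ℝ a b + inner ℝ a b' + inner ℝ a' b + inner ℝ a' b') := by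
    rw [e, f]
    simp only [inner_sub_left, inner_sub_right, inner_add_left, inner_add_right,
      real_inner_smul_left, real_inner_smul_right, inner_self_one h.hv,
      v1, v2, v3, v4]
    ring
  rw [e1]
  nlinarith [mul_le_mul k2 m2 (by norm_num) (by linarith)]

/-- Two members, each touching two contacts of `v`, either share such a contact or are too far
apart to have any common contact; they do not touch each other. -/
lemma FiveStar.double_pair (h : FiveStar V A L v) {l m : E3} (hl : l ∈ L) (hm : m ∈ L)
    (hlm : l ≠ m) (dl : Dbl A l) (dm : Dbl A m) :
    inner ℝ l m < (-(1 / 2) : ℝ) ∨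
      (inner ℝ l m ≤ (11 / 27 : ℝ) ∧ ∃ w ∈ A, Ct l w ∧ Ct m w) := by
  obtain ⟨a, ha, a', ha', haa, h1, h2⟩ := dl
  obtain ⟨b, hb, b', hb', hbb, h3, h4⟩ := dm
  by_cases e1 : a = b
  · subst e1
    exact Or.inr ⟨h.inner_shared hl hm hlm ha ha' hb' haa hbb h1 h2 h3 h4, a, ha, h1, h3⟩
  by_cases e2 : a = b'
  · subst e2
    exact Or.inr ⟨h.inner_shared hl hm hlm ha ha' hb haa hbb.symm h1 h2 h4 h3, a, ha, h1, h4⟩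
  by_cases e3 : a' = b
  · subst e3
    exact Or.inr ⟨h.inner_shared hl hm hlm ha' ha hb' haa.symm hbb h2 h1 h3 h4, a', ha', h2, h3⟩
  by_cases e4 : a' = b'
  · subst e4
    exact Or.inr ⟨h.inner_shared hl hm hlm ha' ha hb haa.symm hbb.symm h2 h1 h4 h3,
      a', ha', h2, h4⟩
  exact Or.inl (h.inner_not_shared hl hm ha ha' hb hb' haa hbb e1 e2 e3 e4 h1 h2 h3 h4)

lemma FiveStar.double_not_ct (h : FiveStar V A L v) {l m : E3} (hl : l ∈ L) (hm : m ∈ L)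
    (dl : Dbl A l) (dm : Dbl A m) : ¬ Ct l m := by
  intro hc
  have hlm : l ≠ m := hc.ne (h.nL hl)
  unfold Ct at hc
  rcases h.double_pair hl hm hlm dl dm with h1 | ⟨h1, -⟩ <;> linarith

/-- A member touching two members of the kind considered in `FiveStar.double_pair` lies close to
`-v`. -/
lemma FiveStar.common_double (h : FiveStar V A L v) {l m q : E3} (hl : l ∈ L) (hm : m ∈ L)
    (hq : q ∈ L) (hlm : l ≠ m) (dl : Dbl A l) (dm : Dbl A m) (h1 : Ct q l) (h2 : Ct q m) :
    inner ℝ v q < (-(1 / 2) : ℝ) ∧ ∃ w ∈ A, Ct l w ∧ Ct m w := by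
  have g := inner_ge_of_common (h.nL hl) (h.nL hm) (h.nL hq) h1.symm h2.symm
  rcases h.double_pair hl hm hlm dl dm with k | ⟨k, w, hw, h3, h4⟩
  · linarith
  refine ⟨?_, w, hw, h3, h4⟩
  have e := add_eq_of_common (h.nL hl) (h.nL hm) (h.nL hq) (h.nA hw) hlm (h.ne_AL hw hq).symm
    h1 h2 h3.symm h4.symm
  have e1 := congrArg (fun x => (inner ℝ v x : ℝ)) e
  have k1 : inner ℝ v w = (1 / 2 : ℝ) := h.ct w hw
  simp only [inner_add_right, real_inner_smul_right, k1] at e1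
  have f1 := h.far hl
  have f2 := h.far hm
  have i1 : (27 / 38 : ℝ) ≤ (1 + inner ℝ l m : ℝ)⁻¹ := by
    rw [le_inv_comm₀ (by norm_num) (by linarith)]; norm_num; linarith
  nlinarith

/-- One of the at most two common contacts is a contact of `v`, hence not in `L`. -/
lemma FiveStar.common_double_le_one (h : FiveStar V A L v) {l m : E3} (hl : l ∈ L) (hm : m ∈ L)
    (hlm : l ≠ m) (dl : Dbl A l) (dm : Dbl A m) :
    (L.filter fun u => Ct l u ∧ Ct m u).card ≤ 1 := by
  by_contra hcon
  obtain ⟨p, hp, q, hq, hpq⟩ := Finset.one_lt_card.1 (not_le.1 hcon)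
  obtain ⟨hpL, p1, p2⟩ := Finset.mem_filter.1 hp
  obtain ⟨hqL, q1, q2⟩ := Finset.mem_filter.1 hq
  obtain ⟨-, w, hw, w1, w2⟩ := h.common_double hl hm hpL hlm dl dm p1.symm p2.symm
  have := common_contacts_le_two (h.nL hl) (h.nL hm) hlm {p, q, w} (by
    simp only [Finset.mem_insert, Finset.mem_singleton]
    rintro x (rfl | rfl | rfl)
    · exact ⟨h.nL hpL, p1.symm, p2.symm⟩
    · exact ⟨h.nL hqL, q1.symm, q2.symm⟩
    · exact ⟨h.nA hw, w1.symm, w2.symm⟩)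
  rw [Finset.card_eq_three.2 ⟨p, q, w, hpq, (h.ne_AL hw hpL).symm, (h.ne_AL hw hqL).symm, rfl⟩]
    at this
  omega

lemma FiveStar.doubles_le_one (h : FiveStar V A L v) {q : E3} (hq : q ∈ L)
    (hq2 : (-(1 / 2) : ℝ) ≤ inner ℝ v q) (D : Finset E3) (hD : D ⊆ L) (hd : ∀ l ∈ D, Dbl A l) :
    dg Ct D q ≤ 1 := by
  by_contra hcon
  obtain ⟨l, hl, m, hm, hlm⟩ := Finset.one_lt_card.1 (not_le.1 hcon)
  obtain ⟨l1, l2⟩ := Finset.mem_filter.1 hl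
  obtain ⟨m1, m2⟩ := Finset.mem_filter.1 hm
  linarith [(h.common_double (hD l1) (hD m1) hq hlm (hd l l1) (hd m m1) l2 m2).1]

lemma FiveStar.doubles_le_two (h : FiveStar V A L v) {q : E3} (hq : q ∈ L)
    (D : Finset E3) (hD : D ⊆ L) (hd : ∀ l ∈ D, Dbl A l) : dg Ct D q ≤ 2 := by
  by_contra hcon
  obtain ⟨x, y, z, hx, hy, hz, hxy, hxz, hyz⟩ := Finset.two_lt_card_iff.1 (not_le.1 hcon)
  obtain ⟨x1, x2⟩ := Finset.mem_filter.1 hx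
  obtain ⟨y1, y2⟩ := Finset.mem_filter.1 hy
  obtain ⟨z1, z2⟩ := Finset.mem_filter.1 hz
  -- a contact of `v` touching all three would have three contacts in common with `q`
  have tri : ∀ w ∈ A, Ct x w → Ct y w → Ct z w → False := by
    intro w hw wx wy wz
    have := common_contacts_le_two (h.nL hq) (h.nA hw) (h.ne_AL hw hq).symm {x, y, z} (by
      simp only [Finset.mem_insert, Finset.mem_singleton]
      rintro u (rfl | rfl | rfl)
      · exact ⟨h.nL (hD x1), x2.symm, wx⟩
      · exact ⟨h.nL (hD y1), y2.symm, wy⟩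
      · exact ⟨h.nL (hD z1), z2.symm, wz⟩)
    rw [Finset.card_eq_three.2 ⟨x, y, z, hxy, hxz, hyz, rfl⟩] at this
    omega
  obtain ⟨-, a, ha, a1, a2⟩ := h.common_double (hD x1) (hD y1) hq hxy (hd x x1) (hd y y1) x2 y2
  obtain ⟨-, b, hb, b1, b2⟩ := h.common_double (hD x1) (hD z1) hq hxz (hd x x1) (hd z z1) x2 z2
  obtain ⟨-, c, hc, c1, c2⟩ := h.common_double (hD y1) (hD z1) hq hyz (hd y y1) (hd z z1) y2 z2
  have hab : a ≠ b := by rintro rfl; exact tri a ha a1 a2 b2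
  have hac : a ≠ c := by rintro rfl; exact tri a ha a1 a2 c2
  have hbc : b ≠ c := by rintro rfl; exact tri b hb b1 c1 b2
  obtain ⟨-, -, -, -, -, -, g1⟩ := h.double (hD x1) ha hb hab a1 b1
  obtain ⟨-, -, -, -, -, -, g2⟩ := h.double (hD y1) ha hc hac a2 c1
  obtain ⟨-, -, -, -, -, -, g3⟩ := h.double (hD z1) hb hc hbc b2 c2
  exact h.no_close_triangle ha hb hc hab hac hbc g1 g2 g3

/-- Members of the belt `-1/2 ≤ ⟪v, ·⟫ ≤ -11/38` are seen from `v` at mutual angles larger than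
`60°`. -/
lemma FiveStar.belt_sep (h : FiveStar V A L v) {l m : E3} (hl : l ∈ L) (hm : m ∈ L) (hlm : l ≠ m)
    (bl : (-(1 / 2) : ℝ) ≤ inner ℝ v l) (bm : (-(1 / 2) : ℝ) ≤ inner ℝ v m) :
    pr v l m < 1 / 2 * (√(pr v l l) * √(pr v m m)) := by
  have h1 := h.far hl
  have h2 := h.far hm
  have h3 := h.kiss.2 l (h.hL hl) m (h.hL hm) hlm
  have e : pr v l m = inner ℝ l m - inner ℝ v l * inner ℝ v m := rfl
  rw [← Real.sqrt_mul (pr_self_nonneg v h.hv l), pr_self (h.nL hl), pr_self (h.nL hm), e]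
  set a : ℝ := inner ℝ v l
  set b : ℝ := inner ℝ v m
  have hab : (11 / 38 : ℝ) * (11 / 38) ≤ a * b := by nlinarith
  have hab' : a * b ≤ 1 / 4 := by nlinarith
  have hd : (a - b) ^ 2 ≤ (4 / 19) ^ 2 := by
    rw [sq_le_sq, abs_of_pos (by norm_num : (0 : ℝ) < 4 / 19), abs_le]
    constructor <;> linarith
  have : 2 * (1 / 2 - a * b) < √((1 - a ^ 2) * (1 - b ^ 2)) :=
    Real.lt_sqrt_of_sq_lt (by nlinarith)
  linarith

lemma FiveStar.belt_card (h : FiveStar V A L v) (B : Finset E3) (hB : B ⊆ L)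
    (hb : ∀ l ∈ B, (-(1 / 2) : ℝ) ≤ inner ℝ v l) : B.card ≤ 5 := by
  refine card_le_five v h.hv B (fun y hy => ?_) fun y hy z hz hyz =>
    h.belt_sep (hB hy) (hB hz) hyz (hb y hy) (hb z hz)
  rw [pr_self (h.nL (hB hy))]
  nlinarith [hb y hy, h.far (hB hy)]

/-- A member and its contacts within the belt are directions in a half-plane, as seen from `v`. -/
lemma FiveStar.belt_dg (h : FiveStar V A L v) (B : Finset E3) (hB : B ⊆ L)
    (hb : ∀ l ∈ B, (-(1 / 2) : ℝ) ≤ inner ℝ v l) {l : E3} (hl : l ∈ B) : dg Ct B l ≤ 2 := by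
  have hn : l ∉ B.filter fun m => Ct l m := fun hh =>
    (Finset.mem_filter.1 hh).2.ne (h.nL (hB hl)) rfl
  have hsub : insert l (B.filter fun m => Ct l m) ⊆ B :=
    Finset.insert_subset hl (Finset.filter_subset _ _)
  have := card_le_three_of_half v h.hv (insert l (B.filter fun m => Ct l m)) (-l)
    (fun y hy => ?_) fun y hy z hz hyz =>
    (h.belt_sep (hB (hsub hy)) (hB (hsub hz)) hyz (hb y (hsub hy)) (hb z (hsub hz))).le
  · rw [Finset.card_insert_of_notMem hn] at this
    unfold dg; omega
  · have h1 := hb l hl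
    have h2 := h.far (hB hl)
    have h3 := hb y (hsub hy)
    have h4 := h.far (hB (hsub hy))
    rw [pr_neg_left]
    rcases Finset.mem_insert.1 hy with rfl | hy
    · rw [pr_self (h.nL (hB hl))]; nlinarith
    · have : inner ℝ l y = (1 / 2 : ℝ) := (Finset.mem_filter.1 hy).2
      unfold pr; rw [this]; nlinarith

/-- The contacts in `L` of a member of the belt lie, as seen from it, in the half-plane turned away
from `v`. -/
lemma FiveStar.belt_dg_L (h : FiveStar V A L v) {l : E3} (hl : l ∈ L)
    (hb : (-(1 / 2) : ℝ) ≤ inner ℝ v l) : dg Ct L l ≤ 3 := by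
  refine half_plane_contacts h.kiss (h.nL hl) (d := v) _ ((Finset.filter_subset _ _).trans h.hL)
    (fun x hx => (Finset.mem_filter.1 hx).2) fun x hx => ?_
  obtain ⟨hxL, hlx⟩ := Finset.mem_filter.1 hx
  have : inner ℝ l x = (1 / 2 : ℝ) := hlx
  unfold pr; rw [this, real_inner_comm v l]
  linarith [h.far hxL]

/-- Five members of the belt with a common contact all lie on its lower edge. -/
lemma FiveStar.antipode (h : FiveStar V A L v) {z : E3} (hz : z ∈ L) (T : Finset E3) (hT : T ⊆ L)
    (hc : ∀ q ∈ T, Ct z q) (h5 : T.card = 5) (hb : ∀ q ∈ T, (-(1 / 2) : ℝ) ≤ inner ℝ v q)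
    {q : E3} (hq : q ∈ T) : inner ℝ v q = (-(1 / 2) : ℝ) := by
  obtain ⟨w, hw, h0, h1⟩ := covering_sq h.kiss (d := -v) (h.nL hz) T (hT.trans h.hL) hc h5
  have hf := h.far hz
  have hwz : inner ℝ z w = (1 / 2 : ℝ) := hc w hw
  have hbw := hb w hw
  have e1 : pr z (-v) w = -inner ℝ v w + inner ℝ v z / 2 := by
    unfold pr; rw [inner_neg_left, inner_neg_right, hwz, real_inner_comm v z]; ring
  rw [pr_self (by rw [norm_neg, h.hv]), e1, inner_neg_right, real_inner_comm v z] at h1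
  rw [e1] at h0
  have hu := abs_real_inner_le_norm v z
  rw [h.hv, h.nL hz, mul_one, abs_le] at hu
  set u : ℝ := inner ℝ v z
  have h2 : (-inner ℝ v w + u / 2) ^ 2 ≤ ((1 + u) / 2) ^ 2 :=
    pow_le_pow_left₀ h0 (by linarith) 2
  have hu1 : u = -1 := by
    rcases hu.1.eq_or_lt with e | e
    · exact e.symm
    · nlinarith
  have hzv : -v = z := eq_of_inner_one (by rw [norm_neg, h.hv]) (h.nL hz) (by
    rw [inner_neg_left]; change -u = 1; rw [hu1]; norm_num)
  have := hc q hq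
  unfold Ct at this
  rw [← hzv, inner_neg_left] at this
  linarith

/-! ### The contact graph of a kissing family -/

/-- Every contact of `v` has at most two contacts in `A`, they do not all have two, and the sum is
even. -/
lemma FiveStar.sum_A_le (h : FiveStar V A L v) : ∑ a ∈ A, dg Ct A a ≤ 8 := by
  have h2 : ∀ a ∈ A, dg Ct A a ≤ 2 := by
    intro a ha
    refine common_contacts_le_two h.hv (h.nA ha) ((h.ct a ha).ne h.hv) _ fun x hx => ?_
    obtain ⟨hxA, hax⟩ := Finset.mem_filter.1 hx
    exact ⟨h.nA hxA, (h.ct x hxA).symm, hax.symm⟩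
  have h9 : ∑ a ∈ A, dg Ct A a < ∑ a ∈ A, 2 := by
    refine Finset.sum_lt_sum h2 ?_
    by_contra hcon
    push Not at hcon
    exact h.exists_not_two fun a ha => le_antisymm (h2 a ha) (hcon a ha)
  rw [Finset.sum_const, h.five] at h9
  have := even_sum_dg (r := Ct) (fun _ _ => Ct.symm) A fun x hx hh => hh.ne (h.nA hx) rfl
  rcases this with ⟨k, hk⟩
  simp only [smul_eq_mul] at h9
  omega

/-- The geometric input of `count_le`, applied to the members with two, one and no contacts in `A`. -/
lemma FiveStar.sum_L_le (h : FiveStar V A L v) (h6 : L.card ≤ 6) :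
    2 * ∑ l ∈ L, dg Ct A l + ∑ l ∈ L, dg Ct L l ≤ 31 := by
  set D := L.filter fun l => dg Ct A l = 2 with hD
  set S := L.filter fun l => dg Ct A l = 1 with hS
  set Z := L.filter fun l => dg Ct A l = 0 with hZ
  have hDL : D ⊆ L := Finset.filter_subset _ _
  have hSL : S ⊆ L := Finset.filter_subset _ _
  have hZL : Z ⊆ L := Finset.filter_subset _ _
  have hBL : D ∪ S ⊆ L := Finset.union_subset hDL hSL
  have hDS : Disjoint D S := Finset.disjoint_filter.2 fun x _ h1 h2 => by omega
  have hBZ : Disjoint (D ∪ S) Z := by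
    rw [Finset.disjoint_union_left]
    exact ⟨Finset.disjoint_filter.2 fun x _ h1 h2 => by omega,
      Finset.disjoint_filter.2 fun x _ h1 h2 => by omega⟩
  have hL : L = (D ∪ S) ∪ Z := by
    ext x
    simp only [hD, hS, hZ, Finset.mem_union, Finset.mem_filter]
    constructor
    · intro hx
      have := h.dg_A_le hx
      have h3 : dg Ct A x = 2 ∨ dg Ct A x = 1 ∨ dg Ct A x = 0 := by omega
      tauto
    · tauto
  have dbl : ∀ l ∈ D, Dbl A l := by
    intro l hl
    have : 1 < (A.filter fun w => Ct l w).card := by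
      have := (Finset.mem_filter.1 hl).2
      unfold dg at this; omega
    obtain ⟨w, hw, w', hw', hne⟩ := Finset.one_lt_card.1 this
    exact ⟨w, (Finset.mem_filter.1 hw).1, w', (Finset.mem_filter.1 hw').1, hne,
      (Finset.mem_filter.1 hw).2, (Finset.mem_filter.1 hw').2⟩
  have belt : ∀ l ∈ D ∪ S, (-(1 / 2) : ℝ) ≤ inner ℝ v l := by
    intro l hl
    have : 0 < (A.filter fun w => Ct l w).card := by
      rcases Finset.mem_union.1 hl with h1 | h1
      · have := (Finset.mem_filter.1 h1).2
        unfold dg at this; omega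
      · have := (Finset.mem_filter.1 h1).2
        unfold dg at this; omega
    obtain ⟨w, hw⟩ := Finset.card_pos.1 this
    exact h.ge_neg_half (hBL hl) (Finset.mem_filter.1 hw).1 (Finset.mem_filter.1 hw).2
  have key := count_le (r := Ct) (fun _ _ => Ct.symm) L D S Z
    (fun x hx hh => hh.ne (h.nL hx) rfl) hDS hBZ hL h6
    (fun x hx => contacts_card_le_five h.kiss (h.nL hx) _ ((Finset.filter_subset _ _).trans h.hL)
      fun y hy => (Finset.mem_filter.1 hy).2)
    (fun x hx => h.belt_dg_L (hBL hx) (belt x hx))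
    (h.belt_card _ hBL belt)
    (fun x hx => h.belt_dg _ hBL belt hx)
    (fun x hx y hy => h.double_not_ct (hDL hx) (hDL hy) (dbl x hx) (dbl y hy))
    (fun x hx => h.doubles_le_one (hSL hx) (belt x (Finset.mem_union_right _ hx)) D hDL dbl)
    (fun x hx => h.doubles_le_two (hZL hx) D hDL dbl)
    (fun x hx y hy hxy => common_contacts_le_two (h.nL hx) (h.nL hy) hxy _ fun u hu => by
      obtain ⟨hu1, hu2, hu3⟩ := Finset.mem_filter.1 hu
      exact ⟨h.nL hu1, hu2.symm, hu3.symm⟩)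
    (fun x hx y hy hxy => h.common_double_le_one (hDL hx) (hDL hy) hxy (dbl x hx) (dbl y hy))
    (fun ⟨x, hx⟩ hL6 z hz => by
      have hzL : z ∈ L := hZL (by rw [hz]; simp)
      by_contra hcon
      have hi : ¬ Ct z z := fun hh => hh.ne (h.nL hzL) rfl
      have h5 : (L.filter fun y => Ct z y).card = 5 := by
        have := dg_le_sub_one hzL hi
        unfold dg at this hcon
        omega
      have heq : (L.filter fun y => Ct z y) = L.erase z := by
        refine Finset.eq_of_subset_of_card_le (fun y hy => ?_) ?_
        · obtain ⟨h1, h2⟩ := Finset.mem_filter.1 hy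
          exact Finset.mem_erase.2 ⟨(h2.ne (h.nL hzL)).symm, h1⟩
        · rw [Finset.card_erase_of_mem hzL, h5, hL6]
      have hxz : x ≠ z := by
        rintro rfl
        exact Finset.disjoint_left.1 hBZ (Finset.mem_union_left _ hx) (by rw [hz]; simp)
      have hval := h.antipode hzL _ (Finset.filter_subset _ _)
        (fun q hq => (Finset.mem_filter.1 hq).2) h5 (fun q hq => by
          rw [heq] at hq
          obtain ⟨h1, h2⟩ := Finset.mem_erase.1 hq
          rw [hL] at h2
          rcases Finset.mem_union.1 h2 with h3 | h3
          · exact belt q h3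
          · rw [hz] at h3; exact absurd (Finset.mem_singleton.1 h3) h1)
        (q := x) (by rw [heq]; exact Finset.mem_erase.2 ⟨hxz, hDL hx⟩)
      obtain ⟨w, hw, w', hw', hne, k1, k2⟩ := dbl x hx
      obtain ⟨c, -, -, hc, hc2, -⟩ := h.double (hDL hx) hw hw' hne k1 k2
      linarith)
  have e : ∑ l ∈ L, dg Ct A l = 2 * D.card + S.card := by
    conv_lhs => rw [hL]
    rw [Finset.sum_union hBZ, Finset.sum_union hDS,
      Finset.sum_congr rfl fun x hx => (Finset.mem_filter.1 hx).2,
      Finset.sum_congr (s₁ := S) rfl fun x hx => (Finset.mem_filter.1 hx).2,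
      Finset.sum_congr (s₁ := Z) rfl fun x hx => (Finset.mem_filter.1 hx).2]
    simp only [Finset.sum_const, smul_eq_mul]
    ring
  omega

/-- A kissing family has at most `24` contacts; the sum of the degrees counts each of them twice. -/
theorem Kissing.sum_dg_le (hV : Kissing V) : ∑ x ∈ V, dg Ct V x ≤ 48 := by
  have h12 := hV.card_le
  have h5 : ∀ x ∈ V, dg Ct V x ≤ 5 := fun x hx =>
    contacts_card_le_five hV (hV.1 x hx) _ (Finset.filter_subset _ _)
      fun y hy => (Finset.mem_filter.1 hy).2
  by_cases h4 : ∀ x ∈ V, dg Ct V x ≤ 4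
  · have := Finset.sum_le_card_nsmul V (fun x => dg Ct V x) 4 h4
    simp only [smul_eq_mul] at this
    omega
  push Not at h4
  obtain ⟨v, hv, hv4⟩ := h4
  have hi : ∀ x ∈ V, ¬ Ct x x := fun x hx hh => hh.ne (hV.1 x hx) rfl
  set A := V.filter fun y => Ct v y with hA
  have cA : A.card = 5 := le_antisymm (h5 v hv) hv4
  have hvA : v ∉ A := fun hh => hi v hv (Finset.mem_filter.1 hh).2
  have hAV : A ⊆ V := Finset.filter_subset _ _
  set P := insert v A with hP
  have hPV : P ⊆ V := Finset.insert_subset hv hAV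
  set L := V \ P with hL
  have st : FiveStar V A L v :=
    { kiss := hV
      hv := hV.1 v hv
      hvV := hv
      hA := hAV
      hL := Finset.sdiff_subset
      ct := fun a ha => (Finset.mem_filter.1 ha).2
      five := cA
      ne := fun l hl hh => (Finset.mem_sdiff.1 hl).2 (by rw [hh]; exact Finset.mem_insert_self _ _)
      nct := fun l hl hh => (Finset.mem_sdiff.1 hl).2 (Finset.mem_insert_of_mem hh) }
  have cL : L.card ≤ 6 := by
    rw [hL, Finset.card_sdiff_of_subset hPV, hP, Finset.card_insert_of_notMem hvA, cA]
    omega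
  have k1 := st.sum_A_le
  have k2 := st.sum_L_le cL
  have sy : ∀ x y : E3, Ct x y → Ct y x := fun _ _ => Ct.symm
  have eV : V = P ∪ L := by rw [hL, Finset.union_sdiff_of_subset hPV]
  have e1 := sum_dg_union sy (Finset.disjoint_sdiff : Disjoint P (V \ P))
  rw [← hL, ← eV] at e1
  have dv : Disjoint {v} A := Finset.disjoint_singleton_left.2 hvA
  have e2 := sum_dg_union sy dv
  rw [← Finset.insert_eq, ← hP, Finset.sum_singleton] at e2
  have e3 : dg Ct {v} v = 0 := by unfold dg; simp [hi v hv]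
  have e4 : ∑ x ∈ A, dg Ct {v} x = 5 := by
    rw [sum_dg_comm sy, Finset.sum_singleton, ← cA]
    unfold dg
    rw [Finset.filter_true_of_mem fun a ha => st.ct a ha]
  have e5 : ∑ x ∈ L, dg Ct P x = ∑ x ∈ L, dg Ct A x := by
    refine Finset.sum_congr rfl fun x hx => ?_
    rw [hP, Finset.insert_eq, dg_union dv]
    have : dg Ct {v} x = 0 := by
      unfold dg
      rw [Finset.card_eq_zero, Finset.filter_eq_empty_iff]
      intro y hy hh
      rw [Finset.mem_singleton.1 hy] at hh
      exact st.nct x hx (Finset.mem_filter.2 ⟨(Finset.mem_sdiff.1 hx).1, hh.symm⟩)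
    omega
  obtain ⟨k, hk⟩ := even_sum_dg sy V hi
  omega

end

/-! ### Compactness -/

/-- Families of `n` almost unit vectors, almost separated by `1`, in which the pairs of `S` are
almost at distance `1`; the tolerance is `α`. -/
def approx (n : ℕ) (S : Finset (Fin n × Fin n)) (α : ℝ) : Set (Fin n → E3) :=
  {y | (∀ i, |‖y i‖ - 1| ≤ α) ∧ (∀ i j, i ≠ j → 1 - α ≤ ‖y i - y j‖) ∧
    ∀ p ∈ S, |‖y p.1 - y p.2‖ - 1| ≤ α}

lemma approx_mono {n : ℕ} {S : Finset (Fin n × Fin n)} {α β : ℝ} (h : α ≤ β) :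
    approx n S α ⊆ approx n S β := fun _ hy =>
  ⟨fun i => (hy.1 i).trans h, fun i j hij => le_trans (by linarith) (hy.2.1 i j hij),
    fun p hp => (hy.2.2 p hp).trans h⟩

lemma isClosed_approx (n : ℕ) (S : Finset (Fin n × Fin n)) (α : ℝ) :
    IsClosed (approx n S α) := by
  have e : approx n S α = (⋂ i, {y | |‖y i‖ - 1| ≤ α}) ∩
      ((⋂ i, ⋂ j, ⋂ _ : i ≠ j, {y | 1 - α ≤ ‖y i - y j‖}) ∩
        ⋂ p ∈ S, {y | |‖y p.1 - y p.2‖ - 1| ≤ α}) := by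
    ext y; simp [approx]
  rw [e]
  refine (isClosed_iInter fun i => isClosed_le (by fun_prop) (by fun_prop)).inter
    ((isClosed_iInter fun i => isClosed_iInter fun j => isClosed_iInter fun _ =>
      isClosed_le (by fun_prop) (by fun_prop)).inter
      (isClosed_biInter fun p _ => isClosed_le (by fun_prop) (by fun_prop)))

lemma isCompact_approx (n : ℕ) (S : Finset (Fin n × Fin n)) {α : ℝ} (hα : 0 ≤ α) :
    IsCompact (approx n S α) := by
  refine Metric.isCompact_of_isClosed_isBounded (isClosed_approx n S α)
    (Metric.isBounded_closedBall (x := (0 : Fin n → E3)) (r := 1 + α) |>.subset fun y hy => ?_)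
  rw [mem_closedBall_zero_iff, pi_norm_le_iff_of_nonneg (by linarith)]
  intro i
  linarith [(abs_le.1 (hy.1 i)).2]

/-- A decreasing sequence of nonempty compact sets has a common point. -/
lemma eventually_approx_empty (n : ℕ) (S : Finset (Fin n × Fin n)) (h0 : approx n S 0 = ∅) :
    ∀ᶠ α in nhdsWithin (0 : ℝ) (Set.Ioi 0), approx n S α = ∅ := by
  have hk : ∃ k : ℕ, approx n S (1 / ((k : ℝ) + 1)) = ∅ := by
    by_contra hcon
    push Not at hcon
    obtain ⟨y, hy⟩ := IsCompact.nonempty_iInter_of_sequence_nonempty_isCompact_isClosed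
      (fun k : ℕ => approx n S (1 / ((k : ℝ) + 1)))
      (fun k => approx_mono (Nat.one_div_le_one_div (Nat.le_succ k)))
      hcon (isCompact_approx n S (by positivity)) fun k => isClosed_approx n S _
    rw [Set.mem_iInter] at hy
    have lim : Filter.Tendsto (fun k : ℕ => 1 / ((k : ℝ) + 1)) Filter.atTop (nhds 0) :=
      tendsto_one_div_add_atTop_nhds_zero_nat
    have : y ∈ approx n S 0 := by
      refine ⟨fun i => ge_of_tendsto' lim fun k => (hy k).1 i, fun i j hij => ?_,
        fun p hp => ge_of_tendsto' lim fun k => (hy k).2.2 p hp⟩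
      exact le_of_tendsto' (tendsto_const_nhds.sub lim) fun k => (hy k).2.1 i j hij
    rw [h0] at this
    exact this
  obtain ⟨k, hk⟩ := hk
  filter_upwards [Ioo_mem_nhdsGT (by positivity : (0 : ℝ) < 1 / ((k : ℝ) + 1))] with α hα
  exact Set.subset_empty_iff.1 (hk ▸ approx_mono hα.2.le)

lemma norm_sub_sq_unit {x y : E3} (hx : ‖x‖ = 1) (hy : ‖y‖ = 1) :
    ‖x - y‖ ^ 2 = 2 - 2 * inner ℝ x y := by
  rw [norm_sub_sq_real, hx, hy]; ring

/-- The rigid version: unit vectors with mutual distances at least `1`. -/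
lemma rigid {n : ℕ} {y : Fin n → E3} (h1 : ∀ i, ‖y i‖ = 1)
    (h2 : ∀ i j, i ≠ j → 1 ≤ ‖y i - y j‖) :
    n ≤ 12 ∧ ∀ S : Finset (Fin n × Fin n),
      (∀ p ∈ S, p.1 ≠ p.2 ∧ ‖y p.1 - y p.2‖ = 1) → S.card ≤ 48 := by
  have inj : Function.Injective y := by
    intro i j hij
    by_contra hne
    have := h2 i j hne
    rw [hij, sub_self, norm_zero] at this
    norm_num at this
  have kis : Kissing (Finset.univ.image y) := by
    constructor
    · intro x hx
      obtain ⟨i, -, rfl⟩ := Finset.mem_image.1 hx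
      exact h1 i
    · intro x hx z hz hxz
      obtain ⟨i, -, rfl⟩ := Finset.mem_image.1 hx
      obtain ⟨j, -, rfl⟩ := Finset.mem_image.1 hz
      have k1 := h2 i j fun hij => hxz (by rw [hij])
      have k2 := norm_sub_sq_unit (h1 i) (h1 j)
      nlinarith
  constructor
  · have := kis.card_le
    rwa [Finset.card_image_of_injective _ inj, Finset.card_univ, Fintype.card_fin] at this
  · intro S hS
    refine le_trans ?_ kis.sum_dg_le
    unfold dg
    rw [← Finset.card_sigma]
    refine Finset.card_le_card_of_injOn (fun p => ⟨y p.1, y p.2⟩) (fun p hp => ?_) ?_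
    · have k2 := norm_sub_sq_unit (h1 p.1) (h1 p.2)
      rw [(hS p hp).2] at k2
      simp only [Finset.coe_sigma, Set.mem_sigma_iff, Finset.mem_coe, Finset.mem_filter,
        Finset.mem_image, Finset.mem_univ, true_and, exists_apply_eq_apply]
      unfold Ct
      linarith
    · rintro ⟨a, b⟩ - ⟨c, d⟩ - h
      simp only [Sigma.mk.injEq, heq_eq_eq] at h
      rw [inj h.1, inj h.2]

/-- Small tolerances allow neither thirteen vectors nor forty-nine close ordered pairs. -/
lemma exists_tolerance : ∃ α₀ > (0 : ℝ), ∀ α ∈ Set.Ioo (0 : ℝ) α₀, ∀ (n : Fin 14)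
    (S : Finset (Fin n × Fin n)), (∀ p ∈ S, p.1 ≠ p.2) → (approx n S α).Nonempty →
      (n : ℕ) ≤ 12 ∧ S.card ≤ 48 := by
  have key : ∀ᶠ α in nhdsWithin (0 : ℝ) (Set.Ioi 0), ∀ (n : Fin 14)
      (S : Finset (Fin n × Fin n)), (∀ p ∈ S, p.1 ≠ p.2) → (approx n S α).Nonempty →
        (n : ℕ) ≤ 12 ∧ S.card ≤ 48 := by
    refine Filter.eventually_all.2 fun n => Filter.eventually_all.2 fun S => ?_
    rcases (approx n S 0).eq_empty_or_nonempty with h0 | ⟨y, hy⟩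
    · filter_upwards [eventually_approx_empty n S h0] with α hα _ hne
      rw [hα] at hne
      exact absurd hne Set.not_nonempty_empty
    · refine Filter.Eventually.of_forall fun α hS _ => ?_
      obtain ⟨r1, r2⟩ := rigid (y := y)
        (fun i => sub_eq_zero.1 (abs_nonpos_iff.1 (hy.1 i)))
        fun i j hij => by simpa using hy.2.1 i j hij
      exact ⟨r1, r2 S fun p hp => ⟨hS p hp, sub_eq_zero.1 (abs_nonpos_iff.1 (hy.2.2 p hp))⟩⟩
  obtain ⟨u, hu, hs⟩ := mem_nhdsGT_iff_exists_Ioo_subset.1 key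
  exact ⟨u, hu, fun α hα => hs hα⟩

theorem neighborhood_cardinality_bounds :
    ∃ α₀ > (0:ℝ), ∀ α ∈ Set.Ioo (0:ℝ) α₀, ∀ (ι : Type) (X : Finset ι) (y : ι → E3),
      (∀ x ∈ X, ∀ x' ∈ X, x ≠ x' → 1 - α < ‖y x - y x'‖) →
      ∀ x ∈ X, (nbhd α X y x).ncard ≤ 12 ∧ (nbhdEdges α X y x).ncard ≤ 48 := by
  obtain ⟨α₀, h0, H⟩ := exists_tolerance
  refine ⟨α₀, h0, fun α hα ι X y hsep x _ => ?_⟩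
  -- an injective enumeration of neighbours gives a family of vectors based at `y x`
  have mem : ∀ {n : ℕ} (e : Fin n → ι), Function.Injective e → (∀ i, e i ∈ nbhd α X y x) →
      ∀ S : Finset (Fin n × Fin n), (∀ p ∈ S, |‖y (e p.1) - y (e p.2)‖ - 1| ≤ α) →
      (fun i => y (e i) - y x) ∈ approx n S α := by
    intro n e inj he S hS
    refine ⟨fun i => (he i).2.2, fun i j hij => ?_, fun p hp => ?_⟩
    · simpa only [sub_sub_sub_cancel_right] using
        (hsep _ (he i).1 _ (he j).1 (inj.ne hij)).le
    · simpa only [sub_sub_sub_cancel_right] using hS p hp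
  have fin : (nbhd α X y x).Finite := X.finite_toSet.subset fun z hz => hz.1
  set N := fin.toFinset with hN
  have cN : (nbhd α X y x).ncard = N.card := Set.ncard_eq_toFinset_card _ fin
  have memN : ∀ z, z ∈ N ↔ z ∈ nbhd α X y x := fun z => fin.mem_toFinset
  have h12 : N.card ≤ 12 := by
    by_contra hcon
    obtain ⟨T, hT, cT⟩ := Finset.exists_subset_card_eq (by omega : 13 ≤ N.card)
    have e := (T.equivFinOfCardEq cT).symm
    have := H α hα 13 ∅ (by simp) ⟨_, mem (fun i => (e i : ι))
      (Subtype.val_injective.comp e.injective) (fun i => (memN _).1 (hT (e i).2)) ∅ (by simp)⟩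
    exact absurd this.1 (by decide)
  refine ⟨cN ▸ h12, ?_⟩
  have e := N.equivFin.symm
  set S : Finset (Fin N.card × Fin N.card) := Finset.univ.filter fun p =>
    ((e p.1 : ι), (e p.2 : ι)) ∈ nbhdEdges α X y x with hS
  have bound : S.card ≤ 48 := by
    refine (H α hα ⟨N.card, by omega⟩ S (fun p hp hpe => ?_) ⟨_, mem (fun i => (e i : ι))
      (Subtype.val_injective.comp e.injective) (fun i => (memN _).1 (e i).2) S
      fun p hp => (Finset.mem_filter.1 hp).2.2.2.2⟩).2
    exact (Finset.mem_filter.1 hp).2.2.2.1 (by rw [hpe])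
  refine le_trans ?_ bound
  have sub : nbhdEdges α X y x ⊆
      ((S.image fun p => ((e p.1 : ι), (e p.2 : ι)) : Finset (ι × ι)) : Set (ι × ι)) := by
    intro p hp
    rw [Finset.mem_coe, Finset.mem_image]
    refine ⟨(e.symm ⟨p.1, (memN _).2 hp.1⟩, e.symm ⟨p.2, (memN _).2 hp.2.1⟩), ?_, by simp⟩
    simpa [hS] using hp
  calc (nbhdEdges α X y x).ncard
      ≤ _ := Set.ncard_le_ncard sub (Finset.finite_toSet _)
    _ = _ := Set.ncard_coe_finset _
    _ ≤ S.card := Finset.card_image_le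

end
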